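/- arXiv:2208.05761 — 2 statements merged into one kernel-verified Lean document; each statement's English description precedes it below -/
import Mathlib

section
/- If G is a finite group whose derived subgroup G' is nilpotent, then for every g ∈ G, e(G) - e(G,g) ≤ 11. -/
open Subgroup

noncomputable def genProb (G : Type*) [Group G] (Y : Set G) (n : ℕ) : ℝ :=
  (Nat.card {v : Fin n → G // Subgroup.closure (Y ∪ Set.range v) = ⊤} : ℝ) /
    (Nat.card G : ℝ) ^ n

noncomputable def eTime (G : Type*) [Group G] (Y : Set G) : ℝ :=
  ∑' n : ℕ, (1 - genProb G Y n)

section Part1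

variable {G : Type*} [Group G] {F : Type*} [Field F]

/-- Crossed homomorphisms `G → F` with respect to a character `χ`. -/
def IsDer (χ : G →* F) (d : G → F) : Prop := ∀ x y, d (x * y) = d x + χ x * d y

lemma IsDer.one {χ : G →* F} {d : G → F} (h : IsDer χ d) : d 1 = 0 := by
  have := h 1 1
  simpa using this

lemma chi_mul_inv (χ : G →* F) (x : G) : χ x * χ x⁻¹ = 1 := by
  rw [← map_mul, mul_inv_cancel, map_one]

lemma chi_ne (χ : G →* F) (x : G) : χ x ≠ 0 := by
  intro h
  have := chi_mul_inv χ x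
  rw [h] at this
  simp at this

lemma IsDer.inv {χ : G →* F} {d : G → F} (h : IsDer χ d) (x : G) : d x + χ x * d x⁻¹ = 0 := by
  have := h x x⁻¹
  rw [mul_inv_cancel, h.one] at this
  exact this.symm

lemma IsDer.conj {χ : G →* F} {d : G → F} (h : IsDer χ d) (x u : G) (hu : χ u = 1) :
    d (x * u * x⁻¹) = χ x * d u := by
  rw [h, h, map_mul, hu]
  linear_combination h.inv x

/-- equalizer of two derivations -/
def derEq {χ : G →* F} {d e : G → F} (hd : IsDer χ d) (he : IsDer χ e) : Subgroup G where
  carrier := {x | d x = e x}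
  one_mem' := by simp [hd.one, he.one]
  mul_mem' := by
    intro a b ha hb
    simp only [Set.mem_ofPred_eq] at *
    rw [hd, he, ha, hb]
  inv_mem' := by
    intro a ha
    simp only [Set.mem_ofPred_eq] at *
    have h1 := hd.inv a
    have h2 := he.inv a
    rw [ha] at h1
    exact mul_left_cancel₀ (chi_ne χ a) (by linear_combination h1 - h2)

lemma isDer_zero (χ : G →* F) : IsDer χ (fun _ => 0) := by intro x y; simp

lemma IsDer.add {χ : G →* F} {d e : G → F} (hd : IsDer χ d) (he : IsDer χ e) :
    IsDer χ (fun x => d x + e x) := by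
  intro x y
  simp only [hd x y, he x y]; ring

lemma IsDer.sub {χ : G →* F} {d e : G → F} (hd : IsDer χ d) (he : IsDer χ e) :
    IsDer χ (fun x => d x - e x) := by
  intro x y
  simp only [hd x y, he x y]; ring

lemma IsDer.smul {χ : G →* F} {d : G → F} (hd : IsDer χ d) (t : F) :
    IsDer χ (fun x => t * d x) := by
  intro x y
  simp only [hd x y]; ring

lemma isDer_inner (χ : G →* F) : IsDer χ (fun x => χ x - 1) := by
  intro x y
  simp only [map_mul]; ring

/-- Simplicity of the module `F` with `G` acting via `χ`. -/
def IsSimp (χ : G →* F) : Prop :=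
  ∀ B : AddSubgroup F, (∀ x, ∀ b ∈ B, χ x * b ∈ B) → B = ⊥ ∨ B = ⊤

/-- Coordinates on a chief factor. -/
structure Step (U U' : Subgroup G) (χ : G →* F) (π : G → F) : Prop where
  le : U' ≤ U
  add : ∀ u ∈ U, ∀ v ∈ U, π (u * v) = π u + π v
  conj : ∀ x, ∀ u ∈ U, π (x * u * x⁻¹) = χ x * π u
  ker : ∀ u ∈ U, π u = 0 ↔ u ∈ U'
  surj : ∀ a, ∃ u ∈ U, π u = a
  simp : IsSimp χ

lemma Step.chi_one {U U' : Subgroup G} {χ : G →* F} {π : G → F} (h : Step U U' χ π)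
    {w : G} (hw : w ∈ U) : χ w = 1 := by
  obtain ⟨u, hu, h1⟩ := h.surj 1
  have h2 := h.conj w u hu
  have e1 := h.add 1 U.one_mem 1 U.one_mem
  have e0 : π 1 = 0 := by simpa using e1
  have e2 := h.add w hw w⁻¹ (U.inv_mem hw)
  rw [mul_inv_cancel, e0] at e2
  rw [h.add _ (U.mul_mem hw hu) _ (U.inv_mem hw), h.add _ hw _ hu, h1] at h2
  linear_combination -h2 - e2

lemma Step.map_one {U U' : Subgroup G} {χ : G →* F} {π : G → F} (h : Step U U' χ π) : π 1 = 0 := by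
  have e1 := h.add 1 U.one_mem 1 U.one_mem
  simpa using e1

/-- Generating tuples modulo `U`. -/
def Gn (Y : Set G) (U : Subgroup G) (n : ℕ) : Set (Fin n → G) :=
  {v | Subgroup.closure (Y ∪ Set.range v) ⊔ U = ⊤}

/-- derivations extending `π` from `U` and vanishing on `Y` -/
def DS (χ : G →* F) (π : G → F) (U : Subgroup G) (Y : Set G) : Set (G → F) :=
  {d | IsDer χ d ∧ (∀ u ∈ U, d u = π u) ∧ ∀ y ∈ Y, d y = 0}

lemma Gn_mono {Y : Set G} {U U' : Subgroup G} (h : U' ≤ U) {n : ℕ} : Gn Y U' n ⊆ Gn Y U n := by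
  intro v hv
  have hv' : Subgroup.closure (Y ∪ Set.range v) ⊔ U' = ⊤ := hv
  show _ = _
  rw [eq_top_iff, ← hv']
  exact sup_le_sup_left h _

lemma Gn_mul {Y : Set G} {U : Subgroup G} {n : ℕ} {v w : Fin n → G} (hv : v ∈ Gn Y U n)
    (h : ∀ i, ∃ u ∈ U, v i = u * w i) : w ∈ Gn Y U n := by
  have hv' : Subgroup.closure (Y ∪ Set.range v) ⊔ U = ⊤ := hv
  show _ = _
  rw [eq_top_iff, ← hv']
  refine sup_le ?_ le_sup_right
  rw [Subgroup.closure_le]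
  rintro x (hx | ⟨i, rfl⟩)
  · exact SetLike.le_def.1 le_sup_left (Subgroup.subset_closure (Or.inl hx))
  · obtain ⟨u, hu, e⟩ := h i
    rw [e]
    refine mul_mem ((le_sup_right : U ≤ _) hu) (SetLike.le_def.1 le_sup_left (Subgroup.subset_closure (Or.inr ⟨i, rfl⟩)))

lemma Step.fiber_card [Finite G] [Finite F] {U U' : Subgroup G} {χ : G →* F} {π : G → F}
    (h : Step U U' χ π) (Y : Set G) (n : ℕ) (d : G → F) (hd : d ∈ DS χ π U Y) :
    Nat.card {v : Fin n → G // v ∈ Gn Y U n ∧ ∀ i, d (v i) = 0} * Nat.card F ^ n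
      = Nat.card (Gn Y U n) := by
  classical
  choose s hsU hs using h.surj
  have key : ∀ a x, d (s a * x) = a + d x := by
    intro a x
    rw [hd.1, hd.2.1 _ (hsU a), hs, h.chi_one (hsU a), one_mul]
  have key2 : ∀ a x, d ((s a)⁻¹ * x) = d x - a := by
    intro a x
    have := key a ((s a)⁻¹ * x)
    rw [mul_inv_cancel_left] at this
    rw [this]; ring
  have e : ({v : Fin n → G // v ∈ Gn Y U n ∧ ∀ i, d (v i) = 0} × (Fin n → F)) ≃ Gn Y U n :=
    { toFun := fun p => ⟨fun i => s (p.2 i) * p.1.1 i, Gn_mul p.1.2.1 (fun i =>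
        ⟨(s (p.2 i))⁻¹, U.inv_mem (hsU _), by simp⟩)⟩
      invFun := fun w => (⟨fun i => (s (d (w.1 i)))⁻¹ * w.1 i, Gn_mul w.2 (fun i =>
        ⟨(s (d (w.1 i))), (hsU _), by simp⟩), fun i => by rw [key2]; ring⟩, fun i => d (w.1 i))
      left_inv := by
        rintro ⟨⟨v, hv1, hv2⟩, a⟩
        simp [key, hv2]
      right_inv := by
        rintro ⟨w, hw⟩
        simp }
  rw [← Nat.card_congr e, Nat.card_prod, Nat.card_fun]
  simp

lemma Step.exists_der {U U' : Subgroup G} [U.Normal] [U'.Normal] {χ : G →* F} {π : G → F}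
    (h : Step U U' χ π) (M : Subgroup G) (hM' : U' ≤ M) (hMU : M ⊔ U = ⊤) (hM : M ≠ ⊤) :
    ∃ d, IsDer χ d ∧ (∀ u ∈ U, d u = π u) ∧ ∀ y ∈ M, d y = 0 := by
  have dec : ∀ x : G, ∃ m ∈ M, x * m⁻¹ ∈ U := by
    intro x
    have hx : x ∈ U ⊔ M := by rw [sup_comm, hMU]; trivial
    obtain ⟨u, hu, m, hm, rfl⟩ := Subgroup.mem_sup_of_normal_left.mp hx
    exact ⟨m, hm, by simpa using hu⟩
  have hinv : ∀ u ∈ U, π u⁻¹ = - π u := by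
    intro u hu
    have := h.add u hu _ (U.inv_mem hu)
    rw [mul_inv_cancel, h.map_one] at this
    linear_combination -this
  have hcap : ∀ u ∈ M, u ∈ U → u ∈ U' := by
    let B : AddSubgroup F :=
      { carrier := {a | ∃ u ∈ M, u ∈ U ∧ π u = a}
        zero_mem' := ⟨1, M.one_mem, U.one_mem, h.map_one⟩
        add_mem' := by
          rintro _ _ ⟨u, hu, hu', rfl⟩ ⟨v, hv, hv', rfl⟩
          exact ⟨u * v, M.mul_mem hu hv, U.mul_mem hu' hv', h.add _ hu' _ hv'⟩
        neg_mem' := by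
          rintro _ ⟨u, hu, hu', rfl⟩
          exact ⟨u⁻¹, M.inv_mem hu, U.inv_mem hu', hinv u hu'⟩ }
    have hB : B = ⊥ ∨ B = ⊤ := by
      refine h.simp B ?_
      rintro x _ ⟨u, hu, hu', rfl⟩
      obtain ⟨m, hm, hxm⟩ := dec x
      refine ⟨m * u * m⁻¹, M.mul_mem (M.mul_mem hm hu) (M.inv_mem hm),
        Subgroup.Normal.conj_mem inferInstance _ hu' _, ?_⟩
      rw [h.conj _ _ hu']
      have : χ x = χ (x * m⁻¹) * χ m := by rw [← map_mul]; simp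
      rw [this, h.chi_one hxm, one_mul]
    rcases hB with hB | hB
    · intro u hu hu'
      rw [← h.ker u hu']
      have : π u ∈ B := ⟨u, hu, hu', rfl⟩
      rw [hB] at this
      simpa using this
    · exfalso
      apply hM
      rw [eq_top_iff, ← hMU]
      refine sup_le le_rfl ?_
      intro u hu
      have : π u ∈ B := by rw [hB]; trivial
      obtain ⟨w, hw, hw', e⟩ := this
      have h1 : u * w⁻¹ ∈ U' := by
        rw [← h.ker _ (U.mul_mem hu (U.inv_mem hw')), h.add _ hu _ (U.inv_mem hw'), hinv _ hw', e]
        ring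
      have := M.mul_mem (hM' h1) hw
      simpa using this
  choose f hfM hfU using dec
  have wd : ∀ x m, m ∈ M → x * m⁻¹ ∈ U → π (x * (f x)⁻¹) = π (x * m⁻¹) := by
    intro x m hm hx
    have h1 : (x * m⁻¹)⁻¹ * (x * (f x)⁻¹) = m * (f x)⁻¹ := by group
    have h2 : m * (f x)⁻¹ ∈ U' := by
      apply hcap _ (M.mul_mem hm (M.inv_mem (hfM x)))
      rw [← h1]
      exact U.mul_mem (U.inv_mem hx) (hfU x)
    have h3 : π (m * (f x)⁻¹) = 0 := (h.ker _ (h.le h2)).2 h2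
    have h4 := h.add _ hx _ (h.le h2)
    rw [h3, add_zero, ← h1, mul_inv_cancel_left] at h4
    exact h4
  refine ⟨fun x => π (x * (f x)⁻¹), ?_, ?_, ?_⟩
  · intro x y
    have hc : f x * (y * (f y)⁻¹) * (f x)⁻¹ ∈ U := Subgroup.Normal.conj_mem inferInstance _ (hfU y) _
    have e : x * y * (f x * f y)⁻¹ = (x * (f x)⁻¹) * (f x * (y * (f y)⁻¹) * (f x)⁻¹) := by group
    have h1 := wd (x * y) (f x * f y) (M.mul_mem (hfM x) (hfM y)) (by
      rw [e]; exact U.mul_mem (hfU x) hc)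
    simp only
    rw [h1, e, h.add _ (hfU x) _ hc, h.conj _ _ (hfU y)]
    have : χ x = χ (x * (f x)⁻¹) * χ (f x) := by rw [← map_mul]; simp
    rw [this, h.chi_one (hfU x), one_mul]
  · intro u hu
    have := wd u 1 M.one_mem (by simpa using hu)
    simpa using this
  · intro y hy
    have := wd y y hy (by simp)
    simpa [h.map_one] using this

lemma Step.card_eq [Finite G] [Finite F] {U U' : Subgroup G} [U.Normal] [U'.Normal] {χ : G →* F}
    {π : G → F} (h : Step U U' χ π) (Y : Set G) (n : ℕ) :
    Nat.card (Gn Y U n) * Nat.card F ^ n =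
      Nat.card (Gn Y U' n) * Nat.card F ^ n + Nat.card (DS χ π U Y) * Nat.card (Gn Y U n) := by
  classical
  have hfin : Finite (G → F) := inferInstance
  have hb : ∀ v : Fin n → G, v ∈ Gn Y U n → v ∉ Gn Y U' n →
      ∃ d ∈ DS χ π U Y, ∀ i, d (v i) = 0 := by
    intro v hv hv'
    have hv1 : Subgroup.closure (Y ∪ Set.range v) ⊔ U = ⊤ := hv
    obtain ⟨d, hd, hdU, hdM⟩ := h.exists_der (Subgroup.closure (Y ∪ Set.range v) ⊔ U') le_sup_right
      (by rw [sup_assoc, sup_eq_right.2 h.le]; exact hv) hv'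
    have hsub : ∀ y ∈ Y ∪ Set.range v, d y = 0 := fun y hy =>
      hdM y (SetLike.le_def.1 le_sup_left (Subgroup.subset_closure hy))
    exact ⟨d, ⟨hd, hdU, fun y hy => hsub y (Or.inl hy)⟩, fun i => hsub _ (Or.inr ⟨i, rfl⟩)⟩
  have hu : ∀ v : Fin n → G, v ∈ Gn Y U n → ∀ d ∈ DS χ π U Y, (∀ i, d (v i) = 0) →
      ∀ e ∈ DS χ π U Y, (∀ i, e (v i) = 0) → d = e := by
    intro v hv d hd hdv e he hev
    have hv1 : Subgroup.closure (Y ∪ Set.range v) ⊔ U = ⊤ := hv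
    have : derEq hd.1 he.1 = ⊤ := by
      rw [eq_top_iff, ← hv1]
      refine sup_le ((Subgroup.closure_le _).2 ?_) ?_
      · rintro x (hx | ⟨i, rfl⟩)
        · show d x = e x
          rw [hd.2.2 x hx, he.2.2 x hx]
        · show d _ = e _
          rw [hdv, hev]
      · intro u hu
        show d u = e u
        rw [hd.2.1 u hu, he.2.1 u hu]
    funext x
    have : x ∈ derEq hd.1 he.1 := by rw [this]; trivial
    exact this
  have hn : ∀ v : Fin n → G, ∀ d ∈ DS χ π U Y, (∀ i, d (v i) = 0) → v ∉ Gn Y U' n := by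
    intro v d hd hdv hv
    have hv1 : Subgroup.closure (Y ∪ Set.range v) ⊔ U' = ⊤ := hv
    have : derEq hd.1 (isDer_zero χ) = ⊤ := by
      rw [eq_top_iff, ← hv1]
      refine sup_le ((Subgroup.closure_le _).2 ?_) ?_
      · rintro x (hx | ⟨i, rfl⟩)
        · exact hd.2.2 x hx
        · exact hdv i
      · intro u hu
        show d u = 0
        rw [hd.2.1 u (h.le hu)]
        exact (h.ker u (h.le hu)).2 hu
    obtain ⟨u, huU, hu1⟩ := h.surj 1
    have hu2 : u ∈ derEq hd.1 (isDer_zero χ) := by rw [this]; trivial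
    have hu3 : d u = 0 := hu2
    rw [hd.2.1 u huU, hu1] at hu3
    exact one_ne_zero hu3
  let K : (DS χ π U Y) → Type _ := fun d => {v : Fin n → G // v ∈ Gn Y U n ∧ ∀ i, d.1 (v i) = 0}
  let f : (Gn Y U' n) ⊕ (Σ d : DS χ π U Y, K d) → Gn Y U n := fun s =>
    match s with
    | Sum.inl v => ⟨v.1, Gn_mono h.le v.2⟩
    | Sum.inr p => ⟨p.2.1, p.2.2.1⟩
  have hf : Function.Bijective f := by
    constructor
    · rintro (⟨v, hv⟩ | ⟨⟨d, hd⟩, ⟨v, hv, hdv⟩⟩) (⟨w, hw⟩ | ⟨⟨e, he⟩, ⟨w, hw, hew⟩⟩) heq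
      · simp only [f, Subtype.mk.injEq] at heq
        subst heq; rfl
      · simp only [f, Subtype.mk.injEq] at heq
        subst heq
        exact absurd hv (hn _ e he hew)
      · simp only [f, Subtype.mk.injEq] at heq
        subst heq
        exact absurd hw (hn _ d hd hdv)
      · simp only [f, Subtype.mk.injEq] at heq
        subst heq
        obtain rfl := hu _ hv d hd hdv e he hew
        rfl
    · rintro ⟨v, hv⟩
      by_cases hv' : v ∈ Gn Y U' n
      · exact ⟨Sum.inl ⟨v, hv'⟩, rfl⟩
      · obtain ⟨d, hd, hdv⟩ := hb v hv hv'
        exact ⟨Sum.inr ⟨⟨d, hd⟩, ⟨v, hv, hdv⟩⟩, rfl⟩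
  have hc := Nat.card_congr (Equiv.ofBijective f hf)
  have : ∀ d, Finite (K d) := fun d => inferInstanceAs (Finite {v : Fin n → G // _})
  have := Fintype.ofFinite (DS χ π U Y)
  rw [Nat.card_sum, Nat.card_sigma] at hc
  conv_lhs => rw [← hc]
  rw [add_mul, Finset.sum_mul, Finset.sum_congr rfl (fun d _ => h.fiber_card Y n d.1 d.2)]
  simp

/-- probability of generation modulo `U` -/
noncomputable def pr (Y : Set G) (U : Subgroup G) (n : ℕ) : ℝ :=
  (Nat.card (Gn Y U n) : ℝ) / (Nat.card G : ℝ) ^ n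

lemma pr_nonneg (Y : Set G) (U : Subgroup G) (n : ℕ) : 0 ≤ pr Y U n := by
  unfold pr; positivity

lemma pr_le_one [Finite G] (Y : Set G) (U : Subgroup G) (n : ℕ) : pr Y U n ≤ 1 := by
  unfold pr
  have hG : (0 : ℝ) < Nat.card G := by exact_mod_cast Nat.card_pos
  rw [div_le_one (by positivity)]
  have h1 : Nat.card (Gn Y U n) ≤ Nat.card (Fin n → G) := Nat.card_le_card_of_injective _ Subtype.val_injective
  rw [Nat.card_fun] at h1
  rw [Nat.card_fin] at h1
  exact_mod_cast h1

lemma Step.pr_eq [Finite G] [Finite F] {U U' : Subgroup G} [U.Normal] [U'.Normal] {χ : G →* F}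
    {π : G → F} (h : Step U U' χ π) (Y : Set G) (n : ℕ) :
    pr Y U' n = pr Y U n * (1 - (Nat.card (DS χ π U Y) : ℝ) / (Nat.card F : ℝ) ^ n) := by
  have h1 := h.card_eq Y n
  have hG : (0 : ℝ) < Nat.card G := by exact_mod_cast Nat.card_pos
  have hF : (0 : ℝ) < Nat.card F := by exact_mod_cast Nat.card_pos
  have h2 : (Nat.card (Gn Y U n) : ℝ) * (Nat.card F : ℝ) ^ n =
      Nat.card (Gn Y U' n) * (Nat.card F : ℝ) ^ n + Nat.card (DS χ π U Y) * Nat.card (Gn Y U n) := by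
    exact_mod_cast h1
  unfold pr
  field_simp
  linear_combination -h2

end Part1
section Part2

variable {G : Type*} [Group G] {F : Type*} [Field F]

/-- the situation in which fixing `g` beats the average -/
def Losing (g : G) (U : Subgroup G) (χ : G →* F) (d : G → F) : Prop :=
  χ g = 1 ∧ (∀ e, IsDer χ e → (∀ u ∈ U, e u = 0) → e g = 0) ∧ IsDer χ d ∧ d g ≠ 0

lemma Step.trich [Finite G] [Finite F] {U U' : Subgroup G} {χ : G →* F}
    {π : G → F} (h : Step U U' χ π) (g : G) :
    Nat.card (DS χ π U ∅) ≤ Nat.card F * Nat.card (DS χ π U {g}) ∨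
      ∃ d, (∀ u ∈ U, d u = π u) ∧ Losing g U χ d := by
  classical
  by_cases hex : ∃ e, IsDer χ e ∧ (∀ u ∈ U, e u = 0) ∧ e g ≠ 0
  · left
    obtain ⟨e, he, heU, heg⟩ := hex
    rw [← Nat.card_prod]
    let f : DS χ π U ∅ → F × DS χ π U {g} := fun d =>
      (d.1 g / e g, ⟨fun x => d.1 x - (d.1 g / e g) * e x,
        d.2.1.sub (he.smul _), fun u hu => by simp only [heU u hu, d.2.2.1 u hu]; ring,
        fun y hy => by
          rw [Set.mem_singleton_iff] at hy
          subst hy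
          field_simp
          ring⟩)
    apply Nat.card_le_card_of_injective f
    rintro ⟨d, hd⟩ ⟨d', hd'⟩ heq
    have h1 := congrArg Prod.fst heq
    have h2 := congrArg (fun p => (p.2 : G → F)) heq
    simp only [f] at h1 h2
    ext x
    have := congrFun h2 x
    simp only [h1] at this
    exact sub_left_injective this
  · have hex' : ∀ e, IsDer χ e → (∀ u ∈ U, e u = 0) → e g = 0 := by
      intro e he heU
      by_contra hne
      exact hex ⟨e, he, heU, hne⟩
    by_cases hd : ∃ d, IsDer χ d ∧ (∀ u ∈ U, d u = π u) ∧ d g ≠ 0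
    · right
      obtain ⟨d, hd, hdU, hdg⟩ := hd
      refine ⟨d, hdU, ?_, hex', hd, hdg⟩
      have := hex' _ (isDer_inner χ) (fun u hu => by rw [h.chi_one hu]; ring)
      linear_combination this
    · left
      have h1 : Nat.card (DS χ π U ∅) ≤ Nat.card (DS χ π U {g}) := by
        apply Nat.card_le_card_of_injective (fun d : DS χ π U ∅ => (⟨d.1, d.2.1, d.2.2.1, by
          intro y hy
          rw [Set.mem_singleton_iff] at hy
          subst hy
          by_contra hne
          exact hd ⟨d.1, d.2.1, d.2.2.1, hne⟩⟩ : DS χ π U {g}))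
        intro d d' heq
        have h2 := congrArg (fun p => (p.1 : G → F)) heq
        exact Subtype.ext h2
      exact h1.trans (Nat.le_mul_of_pos_left _ Nat.card_pos)

lemma DS_card_le [Finite G] [Finite F] (U T : Subgroup G) (χ : G →* F) (π : G → F)
    (hT : ∀ e, IsDer χ e → (∀ u ∈ U, e u = 0) → ∀ t ∈ T, e t = 0)
    (hc : Nat.card {e : G → F // IsDer χ e ∧ ∀ t ∈ T, e t = 0} ≤ Nat.card F) :
    Nat.card (DS χ π U ∅) ≤ Nat.card F := by
  classical
  rcases isEmpty_or_nonempty (DS χ π U ∅) with hE | ⟨⟨d0, hd0⟩⟩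
  · simp
  · refine le_trans ?_ hc
    apply Nat.card_le_card_of_injective (fun d : DS χ π U ∅ =>
      (⟨fun x => d.1 x - d0 x, d.2.1.sub hd0.1, hT _ (d.2.1.sub hd0.1) (fun u hu => by
        rw [d.2.2.1 u hu, hd0.2.1 u hu, sub_self])⟩ :
        {e : G → F // IsDer χ e ∧ ∀ t ∈ T, e t = 0}))
    intro d d' heq
    simp only [Subtype.mk.injEq] at heq
    ext x
    have := congrFun heq x
    exact sub_left_injective this

/-- index set of finite fields -/
abbrev Ix := Nat.Primes × ℕ

instance ixFact (i : Ix) : Fact (i.1 : ℕ).Prime := ⟨i.1.2⟩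

/-- the finite field with index `i` -/
abbrev FF (i : Ix) : Type := GaloisField (i.1 : ℕ) (i.2 + 1)

lemma FF_card (i : Ix) : Nat.card (FF i) = (i.1 : ℕ) ^ (i.2 + 1) :=
  GaloisField.card _ _ (Nat.succ_ne_zero _)

instance FF_finite (i : Ix) : Finite (FF i) := inferInstance

/-- the loss bookkeeping -/
def LossInv (g : G) (U : Subgroup G) (Λ : Finset (Σ i : Ix, (G →* FF i))) : Prop :=
  (∀ s ∈ Λ, s.2 g = 1 ∧ ∃ d, IsDer s.2 d ∧ (∀ u ∈ U, d u = 0) ∧ d g ≠ 0) ∧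
  ∀ n, pr {g} U n - pr ∅ U (n + 1) ≤ ∑ s ∈ Λ, ((Nat.card (FF s.1) : ℝ) ^ n)⁻¹

lemma sum_nonneg' (Λ : Finset (Σ i : Ix, (G →* FF i))) (n : ℕ) :
    0 ≤ ∑ s ∈ Λ, ((Nat.card (FF s.1) : ℝ) ^ n)⁻¹ :=
  Finset.sum_nonneg (fun _ _ => by positivity)

lemma LossInv.step_ok [Finite G] {g : G} {U U' : Subgroup G} [U.Normal] [U'.Normal]
    {Λ : Finset (Σ i : Ix, (G →* FF i))} (hI : LossInv g U Λ) {i : Ix} {χ : G →* FF i} {π : G → FF i}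
    (h : Step U U' χ π)
    (hc : Nat.card (DS χ π U ∅) ≤ Nat.card (FF i) * Nat.card (DS χ π U {g})) : LossInv g U' Λ := by
  refine ⟨fun s hs => ?_, fun n => ?_⟩
  · obtain ⟨h1, d, hd, hdU, hdg⟩ := hI.1 s hs
    exact ⟨h1, d, hd, fun u hu => hdU u (h.le hu), hdg⟩
  · have h1 := hI.2 n
    have h2 := h.pr_eq {g} n
    have h3 := h.pr_eq ∅ (n + 1)
    have h4 := sum_nonneg' Λ n
    have hF : (0 : ℝ) < Nat.card (FF i) := by exact_mod_cast Nat.card_pos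
    have hc' : (Nat.card (DS χ π U ∅) : ℝ) ≤ Nat.card (FF i) * Nat.card (DS χ π U {g}) := by
      exact_mod_cast hc
    set q : ℝ := (Nat.card (FF i) : ℝ)
    set c : ℝ := (Nat.card (DS χ π U ∅) : ℝ)
    set c' : ℝ := (Nat.card (DS χ π U {g}) : ℝ)
    have h5 : c / q ^ (n + 1) ≤ c' / q ^ n := by
      rw [div_le_div_iff₀ (by positivity) (by positivity), pow_succ]
      have : 0 < q ^ n := by positivity
      nlinarith
    have h6 : 0 ≤ c / q ^ (n + 1) := by positivity
    have a0 := pr_nonneg {g} U n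
    have b0 := pr_nonneg (∅ : Set G) U (n + 1)
    have b0' := pr_nonneg (∅ : Set G) U' (n + 1)
    have h7 : pr {g} U' n ≤ pr {g} U n * (1 - c / q ^ (n + 1)) := by
      rw [h2]; exact mul_le_mul_of_nonneg_left (by linarith) a0
    rw [h3]
    by_cases hβ : 0 ≤ 1 - c / q ^ (n + 1)
    · have : (pr {g} U n - pr ∅ U (n + 1)) * (1 - c / q ^ (n + 1)) ≤
        (∑ s ∈ Λ, ((Nat.card (FF s.1) : ℝ) ^ n)⁻¹) * (1 - c / q ^ (n + 1)) :=
        mul_le_mul_of_nonneg_right h1 hβ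
      nlinarith
    · have : pr {g} U n * (1 - c / q ^ (n + 1)) ≤ 0 :=
        mul_nonpos_of_nonneg_of_nonpos a0 (by linarith)
      rw [h3] at b0'
      linarith

lemma LossInv.step_loss [Finite G] {g : G} {U U' : Subgroup G} [U.Normal] [U'.Normal]
    {Λ : Finset (Σ i : Ix, (G →* FF i))} (hI : LossInv g U Λ) {i : Ix} {χ : G →* FF i} {d : G → FF i}
    (h : Step U U' χ d) (hL : Losing g U χ d)
    (hc : Nat.card (DS χ d U ∅) ≤ Nat.card (FF i)) : ∃ Λ', LossInv g U' Λ' := by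
  classical
  have hnot : (⟨i, χ⟩ : Σ i : Ix, (G →* FF i)) ∉ Λ := by
    intro hm
    obtain ⟨-, e, he, heU, heg⟩ := hI.1 _ hm
    exact heg (hL.2.1 e he heU)
  refine ⟨insert ⟨i, χ⟩ Λ, fun s hs => ?_, fun n => ?_⟩
  · rcases Finset.mem_insert.1 hs with rfl | hs
    · exact ⟨hL.1, d, hL.2.2.1, fun u hu => (h.ker u (h.le hu)).2 hu, hL.2.2.2⟩
    · obtain ⟨h1, d, hd, hdU, hdg⟩ := hI.1 s hs
      exact ⟨h1, d, hd, fun u hu => hdU u (h.le hu), hdg⟩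
  · rw [Finset.sum_insert hnot]
    have h1 := hI.2 n
    have h2 := h.pr_eq {g} n
    have h3 := h.pr_eq ∅ (n + 1)
    have h4 := sum_nonneg' Λ n
    have hF : (0 : ℝ) < Nat.card (FF i) := by exact_mod_cast Nat.card_pos
    have hc' : (Nat.card (DS χ d U ∅) : ℝ) ≤ Nat.card (FF i) := by
      exact_mod_cast hc
    simp only
    set q : ℝ := (Nat.card (FF i) : ℝ)
    set c : ℝ := (Nat.card (DS χ d U ∅) : ℝ)
    set c' : ℝ := (Nat.card (DS χ d U {g}) : ℝ)
    have h5 : c / q ^ (n + 1) ≤ (q ^ n)⁻¹ := by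
      rw [inv_eq_one_div, div_le_div_iff₀ (by positivity) (by positivity), pow_succ]
      have : 0 < q ^ n := by positivity
      nlinarith
    have h6 : 0 ≤ c / q ^ (n + 1) := by positivity
    have h6' : 0 ≤ c' / q ^ n := by positivity
    have a0 := pr_nonneg {g} U n
    have b0 := pr_nonneg (∅ : Set G) U (n + 1)
    have b1 := pr_le_one (∅ : Set G) U (n + 1)
    have h7 : pr {g} U' n ≤ pr {g} U n := by
      rw [h2]; nlinarith
    rw [h3]
    nlinarith

end Part2
section Part3

variable {G : Type*} [Group G]

/-- In stage one, any derivation killed by `U` but not by `T` has a companion nonzero at `g`. -/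
def PP (g : G) (T U : Subgroup G) : Prop :=
  ∀ (i : Ix) (χ : G →* FF i), (∀ t ∈ T, χ t = 1) → ∀ e, IsDer χ e → (∀ u ∈ U, e u = 0) →
    (∀ t ∈ T, e t = 0) ∨ ∃ e', IsDer χ e' ∧ (∀ u ∈ U, e' u = 0) ∧ e' g ≠ 0

lemma exists_chief [Finite G] (S W : Subgroup G) (hS : S.Normal) (h : S < W) :
    ∃ W' : Subgroup G, W'.Normal ∧ S ≤ W' ∧ W' < W ∧
      ∀ V : Subgroup G, V.Normal → W' ≤ V → V ≤ W → V = W' ∨ V = W := by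
  obtain ⟨W', ⟨h1, h2, h3⟩, h4⟩ := WellFounded.has_min (wellFounded_gt (α := Subgroup G))
    {V | V.Normal ∧ S ≤ V ∧ V < W} ⟨S, hS, le_rfl, h⟩
  refine ⟨W', h1, h2, h3, fun V hV hV1 hV2 => ?_⟩
  by_contra hne
  push Not at hne
  exact h4 V ⟨hV, h2.trans hV1, lt_of_le_of_ne hV2 hne.2⟩ (lt_of_le_of_ne hV1 hne.1.symm)

lemma PP_step {g : G} {T U U' : Subgroup G} (hUT : U ≤ T) (hP : PP g T U)
    {i : Ix} {χ : G →* FF i} {d : G → FF i}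
    (hU : U.Normal) (h : Step U U' χ d) (hd : IsDer χ d) (hdg : d g ≠ 0) : PP g T U' := by
  intro i' χ' hχ' e he heU'
  by_cases heU : ∀ u ∈ U, e u = 0
  · rcases hP i' χ' hχ' e he heU with h1 | ⟨e', h1, h2, h3⟩
    · exact Or.inl h1
    · exact Or.inr ⟨e', h1, fun u hu => h2 u (h.le hu), h3⟩
  · right
    push Not at heU
    obtain ⟨u0, hu0, hu0e⟩ := heU
    have hχU : ∀ u ∈ U, χ' u = 1 := fun u hu => hχ' u (hUT hu)
    choose s hsU hs using h.surj
    have wd : ∀ u ∈ U, e (s (d u)) = e u := by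
      intro u hu
      have h1 : (s (d u))⁻¹ * u ∈ U := U.mul_mem (U.inv_mem (hsU _)) hu
      have h2 : (s (d u))⁻¹ * u ∈ U' := by
        rw [← h.ker _ h1]
        have h3 := h.add (s (d u)) (hsU _) _ h1
        rw [mul_inv_cancel_left, hs] at h3
        linear_combination -h3
      have h3 := he (s (d u)) ((s (d u))⁻¹ * u)
      rw [mul_inv_cancel_left, heU' _ h2] at h3
      rw [h3]; ring
    let φ : FF i → FF i' := fun a => e (s a)
    have hφd : ∀ u ∈ U, φ (d u) = e u := wd
    have hadd : ∀ a b, φ (a + b) = φ a + φ b := by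
      intro a b
      have h1 := h.add _ (hsU a) _ (hsU b)
      rw [hs, hs] at h1
      rw [← h1, hφd _ (U.mul_mem (hsU a) (hsU b)), he, hχU _ (hsU a), one_mul]
    have hmul : ∀ x a, φ (χ x * a) = χ' x * φ a := by
      intro x a
      have h1 := h.conj x _ (hsU a)
      rw [hs] at h1
      rw [← h1, hφd _ (hU.conj_mem _ (hsU a) _), he.conj _ _ (hχU _ (hsU a))]
    let Φ : FF i →+ FF i' := AddMonoidHom.mk' φ hadd
    have hker := h.simp Φ.ker (by
      intro x b hb
      rw [AddMonoidHom.mem_ker] at hb ⊢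
      show φ _ = 0
      rw [hmul]
      have : φ b = 0 := hb
      rw [this, mul_zero])
    refine ⟨fun x => φ (d x), ?_, ?_, ?_⟩
    · intro x y
      simp only [hd x y, hadd, hmul]
    · intro u hu
      simp only
      rw [hφd u (h.le hu), heU' u hu]
    · intro h0
      rcases hker with hk | hk
      · have : d g ∈ Φ.ker := h0
        rw [hk] at this
        exact hdg (by simpa using this)
      · have : d u0 ∈ Φ.ker := by rw [hk]; trivial
        have h1 : φ (d u0) = 0 := this
        rw [hφd _ hu0] at h1
        exact hu0e h1

lemma stage [Finite G] (g : G) (S T : Subgroup G) (hS : S.Normal) (hT : T.Normal) (hST : S ≤ T)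
    (H1 : ∀ (i : Ix) (χ : G →* FF i), (∀ t ∈ T, χ t = 1) →
      (∃ d, IsDer χ d ∧ ∃ t ∈ T, d t ≠ 0) →
      Nat.card {e : G → FF i // IsDer χ e ∧ ∀ t ∈ T, e t = 0} ≤ Nat.card (FF i))
    (H2 : ∀ W W' : Subgroup G, W.Normal → W'.Normal → S ≤ W' → W' < W → W ≤ T →
      (∀ V : Subgroup G, V.Normal → W' ≤ V → V ≤ W → V = W' ∨ V = W) →
      ∃ (i : Ix) (χ : G →* FF i) (π : G → FF i), Step W W' χ π ∧ ∀ t ∈ T, χ t = 1)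
    (hI : ∃ Λ, LossInv g T Λ) : ∃ Λ, LossInv g S Λ := by
  obtain ⟨U, ⟨hU, hSU, hUT, hP, Λ, hΛ⟩, hmin⟩ := WellFounded.has_min
    (wellFounded_lt (α := Subgroup G))
    {U | U.Normal ∧ S ≤ U ∧ U ≤ T ∧ PP g T U ∧ ∃ Λ, LossInv g U Λ}
    ⟨T, hT, hST, le_rfl, fun i χ _ e _ he => Or.inl he, hI⟩
  obtain ⟨W, ⟨hW, hSW, hWU, hWΛ⟩, hminW⟩ := WellFounded.has_min
    (wellFounded_lt (α := Subgroup G))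
    {W | W.Normal ∧ S ≤ W ∧ W ≤ U ∧ LossInv g W Λ} ⟨U, hU, hSU, le_rfl, hΛ⟩
  rcases hSW.eq_or_lt with rfl | hlt
  · exact ⟨Λ, hWΛ⟩
  exfalso
  obtain ⟨W', hW', hSW', hW'W, hchief⟩ := exists_chief S W hS hlt
  obtain ⟨i, χ, π, hstep, hχT⟩ := H2 W W' hW hW' hSW' hW'W (hWU.trans hUT) hchief
  rcases hstep.trich g with hc | ⟨d, hdW, hL⟩
  · exact hminW W' ⟨hW', hSW', hW'W.le.trans hWU, hWΛ.step_ok hstep hc⟩ hW'W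
  · have hd := hL.2.2.1
    have hχU : ∀ u ∈ U, χ u = 1 := fun u hu => hχT u (hUT hu)
    let U' : Subgroup G := U ⊓ derEq hd (isDer_zero χ)
    have hmemU' : ∀ u, u ∈ U' ↔ u ∈ U ∧ d u = 0 := fun u => Iff.rfl
    have hU'n : U'.Normal := by
      refine ⟨fun u hu x => ?_⟩
      rw [hmemU'] at hu ⊢
      refine ⟨hU.conj_mem _ hu.1 _, ?_⟩
      rw [hd.conj _ _ (hχU u hu.1), hu.2, mul_zero]
    have hst : Step U U' χ d :=
      { le := inf_le_left
        add := fun u hu v _ => by rw [hd, hχU u hu, one_mul]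
        conj := fun x u hu => hd.conj x u (hχU u hu)
        ker := fun u hu => by rw [hmemU']; simp [hu]
        surj := fun a => by
          obtain ⟨u, hu, h⟩ := hstep.surj a
          exact ⟨u, hWU hu, by rw [hdW u hu, h]⟩
        simp := hstep.simp }
    have hLU : Losing g U χ d :=
      ⟨hL.1, fun e he heU => hL.2.1 e he (fun u hu => heU u (hWU hu)), hd, hL.2.2.2⟩
    obtain ⟨w, hw, hw1⟩ := hst.surj 1
    have hcard : Nat.card (DS χ d U ∅) ≤ Nat.card (FF i) := by
      refine DS_card_le U T χ d ?_ (H1 i χ hχT ⟨d, hd, w, hUT hw, by rw [hw1]; exact one_ne_zero⟩)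
      intro e he heU
      rcases hP i χ hχT e he heU with h1 | ⟨e', h1, h2, h3⟩
      · exact h1
      · exact absurd (hLU.2.1 e' h1 h2) h3
    have hne : U' < U := by
      refine lt_of_le_of_ne inf_le_left ?_
      intro heq
      have : w ∈ U' := by rw [heq]; exact hw
      rw [hmemU', hw1] at this
      exact one_ne_zero this.2
    refine hmin U' ⟨hU'n, ?_, inf_le_left.trans hUT, PP_step hUT hP hU hst hd hL.2.2.2,
      hΛ.step_loss hst hLU hcard⟩ hne
    intro x hx
    rw [hmemU']
    refine ⟨hSU hx, ?_⟩
    have hxW' := hSW' hx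
    rw [hdW x (hW'W.le hxW')]
    exact (hstep.ker x (hW'W.le hxW')).2 hxW'

end Part3
section Part4

lemma exists_ix {K : Type*} [Field K] [Finite K] : ∃ i : Ix, Nonempty (K ≃+* FF i) := by
  classical
  have := Fintype.ofFinite K
  obtain ⟨p, hp⟩ := CharP.exists K
  obtain ⟨n, hprime, hcard⟩ := FiniteField.card K p
  refine ⟨(⟨p, hprime⟩, (n : ℕ) - 1), ⟨?_⟩⟩
  have := Fintype.ofFinite (FF (⟨p, hprime⟩, (n : ℕ) - 1))
  apply FiniteField.ringEquivOfCardEq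
  rw [← Nat.card_eq_fintype_card (α := FF _), FF_card, hcard]
  simp [Nat.sub_add_cancel n.pos]

lemma field_coord {G : Type*} [Group G] {A : Type*} [AddCommGroup A] [Finite A] [Nontrivial A]
    (ρ : G →* AddMonoid.End A) (hcomm : ∀ x y, ρ x * ρ y = ρ y * ρ x)
    (hsimp : ∀ B : AddSubgroup A, (∀ x, ∀ b ∈ B, ρ x b ∈ B) → B = ⊥ ∨ B = ⊤) :
    ∃ (i : Ix) (χ : G →* FF i) (θ : A ≃+ FF i), ∀ x a, θ (ρ x a) = χ x * θ a := by
  classical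
  let R := Subring.closure (Set.range ρ)
  let : CommRing R := Subring.closureCommRingOfComm (by
    rintro _ ⟨x, rfl⟩ _ ⟨y, rfl⟩; exact hcomm x y)
  have hmem : ∀ x, ρ x ∈ R := fun x => Subring.subset_closure ⟨x, rfl⟩
  have hc : ∀ (r : R) x, ρ x * r.1 = r.1 * ρ x := by
    intro r x
    have := mul_comm (⟨ρ x, hmem x⟩ : R) r
    exact congrArg Subtype.val this
  -- zero on one nonzero vector implies zero
  have hinj : ∀ (r : R) (a : A), a ≠ 0 → r.1 a = 0 → r = 0 := by
    intro r a ha hra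
    have h1 := hsimp (AddMonoidHom.ker r.1) (by
      intro x b hb
      have hb' : r.1 b = 0 := hb
      show r.1 (ρ x b) = 0
      have := DFunLike.congr_fun (hc r x) b
      have h2 : r.1 (ρ x b) = ρ x (r.1 b) := this.symm
      rw [h2, hb', map_zero])
    rcases h1 with h1 | h1
    · exfalso
      have : a ∈ AddMonoidHom.ker r.1 := hra
      rw [h1] at this
      exact ha (by simpa using this)
    · apply Subtype.ext
      ext b
      have : b ∈ AddMonoidHom.ker r.1 := by rw [h1]; trivial
      exact this
  obtain ⟨a0, ha0⟩ := exists_ne (0 : A)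
  have : Finite (AddMonoid.End A) := Finite.of_injective (fun f => (f : A → A)) DFunLike.coe_injective
  have : Finite R := inferInstance
  have hnt : Nontrivial R := ⟨⟨0, 1, fun h => ha0 (by
    have := congrArg (fun r : R => r.1 a0) h
    exact this.symm)⟩⟩
  have hdom : NoZeroDivisors R := ⟨by
    intro r s hrs
    by_cases hs : s.1 a0 = 0
    · right; exact hinj s a0 ha0 hs
    · left
      refine hinj r _ hs ?_
      have := congrArg (fun r : R => r.1 a0) hrs
      exact this⟩
  have : IsDomain R := NoZeroDivisors.to_isDomain R
  let : Field R := (Finite.isField_of_domain R).toField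
  obtain ⟨i, ⟨ψ⟩⟩ := exists_ix (K := R)
  let o : R →+ A := AddMonoidHom.mk' (fun r => r.1 a0) (fun r s => rfl)
  have ho : Function.Bijective o := by
    constructor
    · rw [injective_iff_map_eq_zero]
      intro r hr
      exact hinj r a0 ha0 hr
    · rw [← AddMonoidHom.range_eq_top]
      refine (hsimp o.range ?_).resolve_left ?_
      · rintro x _ ⟨r, rfl⟩
        exact ⟨(⟨ρ x, hmem x⟩ : R) * r, rfl⟩
      · intro h
        have : a0 ∈ o.range := ⟨1, rfl⟩
        rw [h] at this
        exact ha0 (by simpa using this)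
  let θ0 : R ≃+ A := AddEquiv.ofBijective o ho
  refine ⟨i, (ψ : R →* FF i).comp (ρ.codRestrict R hmem), θ0.symm.trans ψ.toAddEquiv, ?_⟩
  intro x a
  obtain ⟨r, rfl⟩ := θ0.surjective a
  have h1 : ρ x (θ0 r) = θ0 ((⟨ρ x, hmem x⟩ : R) * r) := rfl
  rw [h1]
  simp only [AddEquiv.trans_apply, AddEquiv.symm_apply_apply]
  exact map_mul ψ _ _

end Part4
section Part5

open scoped commutatorElement

variable {G : Type*} [Group G]

lemma comm_sup_le {X A B C D : Subgroup G} [B.Normal] [D.Normal] (hX : X ≤ A ⊔ B)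
    (hA : ⁅A, C⁆ ≤ D) (hB : ⁅B, C⁆ ≤ D) : ⁅X, C⁆ ≤ D := by
  rw [Subgroup.commutator_le] at *
  intro x hx c hc
  obtain ⟨a, ha, b, hb, rfl⟩ := Subgroup.mem_sup_of_normal_right.mp (hX hx)
  rw [commutatorElement_mul_left_eq_conj_mul]
  have h2 : D.Normal := inferInstance
  refine D.mul_mem ?_ (hA a ha c hc)
  simpa using h2.conj_mem _ (hB b hb c hc) a

/-- chief factors -/
def Chief (U U' : Subgroup G) : Prop :=
  U' < U ∧ ∀ V : Subgroup G, V.Normal → U' ≤ V → V ≤ U → V = U' ∨ V = U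

lemma Chief.dich {U U' V : Subgroup G} [U.Normal] [U'.Normal] (h : Chief U U') [V.Normal]
    (hV : V ≤ U) : V ≤ U' ∨ U ≤ V ⊔ U' := by
  rcases h.2 (V ⊔ U') inferInstance le_sup_right (sup_le hV h.1.le) with h1 | h1
  · left; rw [← h1]; exact le_sup_left
  · right; rw [h1]

lemma Chief.central {U U' : Subgroup G} [U.Normal] [U'.Normal] (h : Chief U U')
    (hnil : Group.IsNilpotent (commutator G)) : ⁅U, commutator G⁆ ≤ U' := by
  rcases h.dich (V := ⁅U, commutator G⁆) (Subgroup.commutator_le_left _ _) with h1 | h1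
  · exact h1
  exfalso
  obtain ⟨n, hn⟩ := (Subgroup.isNilpotent_iff_lowerCentralSeries _).1 hnil
  have key : ∀ k, U ≤ (commutator G).lowerCentralSeries k ⊔ U' := by
    intro k
    induction k with
    | zero => exact h1.trans (sup_le_sup_right (Subgroup.commutator_le_right _ _) _)
    | succ k ih =>
      refine h1.trans (sup_le ?_ le_sup_right)
      refine comm_sup_le ih ?_ ?_
      · rw [Subgroup.lowerCentralSeries_succ]; exact le_sup_left
      · exact (Subgroup.commutator_le_left _ _).trans le_sup_right
  have := key n
  rw [hn, bot_sup_eq] at this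
  exact absurd h.1 (not_lt_of_ge this)

lemma Chief.abelian {U U' : Subgroup G} [U.Normal] [U'.Normal] (h : Chief U U')
    (hnil : Group.IsNilpotent (commutator G)) : ⁅U, U⁆ ≤ U' := by
  rcases h.dich (V := ⁅U, (⊤ : Subgroup G)⁆) (Subgroup.commutator_le_left _ _) with h1 | h1
  · exact (Subgroup.commutator_mono le_rfl le_top).trans h1
  · have h2 : U ≤ commutator G ⊔ U' :=
      h1.trans (sup_le_sup_right (Subgroup.commutator_mono le_top le_rfl) _)
    refine comm_sup_le h2 ?_ (Subgroup.commutator_le_left _ _)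
    rw [Subgroup.commutator_comm]
    exact h.central hnil

lemma Chief.step [Finite G] {U U' : Subgroup G} [hU : U.Normal] [hU' : U'.Normal] (h : Chief U U')
    (hnil : Group.IsNilpotent (commutator G)) :
    ∃ (i : Ix) (χ : G →* FF i) (π : G → FF i), Step U U' χ π := by
  classical
  have hcen := h.central hnil
  have hab := h.abelian hnil
  rw [Subgroup.commutator_le] at hcen hab
  let mk : G →* G ⧸ U' := QuotientGroup.mk' U'
  have hmk1 : ∀ x, mk x = 1 ↔ x ∈ U' := fun x => QuotientGroup.eq_one_iff x
  have hmks : Function.Surjective mk := QuotientGroup.mk'_surjective U'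
  let N : Subgroup (G ⧸ U') := U.map mk
  have hNn : N.Normal := hU.map mk hmks
  have hNc : IsMulCommutative N := by
    refine ⟨⟨?_⟩⟩
    rintro ⟨_, u, hu, rfl⟩ ⟨_, v, hv, rfl⟩
    apply Subtype.ext
    show mk u * mk v = mk v * mk u
    rw [← commutatorElement_eq_one_iff_mul_comm, ← map_commutatorElement, hmk1]
    exact hab u hu v hv
  have hmemN : ∀ x, mk x ∈ N ↔ x ∈ U := by
    intro x
    constructor
    · rintro ⟨u, hu, e⟩
      have : u⁻¹ * x ∈ U' := by rw [← hmk1, map_mul, map_inv, e]; simp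
      have := U.mul_mem hu (h.1.le this)
      simpa using this
    · intro hx; exact ⟨x, hx, rfl⟩
  let : CommGroup N := { (inferInstance : Group N) with mul_comm := hNc.is_comm.comm }
  let A := Additive N
  let : AddCommGroup A := inferInstanceAs (AddCommGroup (Additive N))
  let el : ∀ u, u ∈ U → A := fun u hu => Additive.ofMul ⟨mk u, (hmemN u).2 hu⟩
  have hel : ∀ a : A, ∃ u, ∃ hu : u ∈ U, el u hu = a := by
    rintro ⟨_, u, hu, rfl⟩
    exact ⟨u, hu, rfl⟩
  have eladd : ∀ u hu v hv, el (u * v) (U.mul_mem hu hv) = el u hu + el v hv := by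
    intro u hu v hv
    apply Additive.toMul.injective
    apply Subtype.ext
    exact map_mul mk u v
  have elker : ∀ u hu, el u hu = 0 ↔ u ∈ U' := by
    intro u hu
    rw [← hmk1]
    constructor
    · intro h0
      exact congrArg (fun a : A => (Additive.toMul a).1) h0
    · intro h0
      apply Additive.toMul.injective
      apply Subtype.ext
      exact h0
  have eleq : ∀ u hu v hv, mk u = mk v → el u hu = el v hv := by
    intro u hu v hv huv
    apply Additive.toMul.injective
    apply Subtype.ext
    exact huv
  let ρ : G →* AddMonoid.End A :=
    { toFun := fun x => MonoidHom.toAdditive (MulAut.conjNormal (H := N) (mk x)).toMonoidHom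
      map_one' := by
        refine AddMonoidHom.ext fun a => ?_
        apply Additive.toMul.injective
        apply Subtype.ext
        show mk 1 * (Additive.toMul a).1 * (mk 1)⁻¹ = (Additive.toMul a).1
        simp
      map_mul' := by
        intro x y
        refine AddMonoidHom.ext fun a => ?_
        apply Additive.toMul.injective
        apply Subtype.ext
        show mk (x * y) * (Additive.toMul a).1 * (mk (x * y))⁻¹ =
          mk x * (mk y * (Additive.toMul a).1 * (mk y)⁻¹) * (mk x)⁻¹
        rw [map_mul]; group }
  have hρ : ∀ x u hu, ρ x (el u hu) = el (x * u * x⁻¹) (hU.conj_mem u hu x) := by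
    intro x u hu
    apply Additive.toMul.injective
    apply Subtype.ext
    show mk x * mk u * (mk x)⁻¹ = mk (x * u * x⁻¹)
    simp
  have hnt : Nontrivial A := by
    obtain ⟨u, hu, hu'⟩ := SetLike.exists_of_lt h.1
    exact ⟨⟨el u hu, 0, fun h0 => hu' ((elker u hu).1 h0)⟩⟩
  have hfin : Finite A := inferInstanceAs (Finite N)
  have hsimp : ∀ B : AddSubgroup A, (∀ x, ∀ b ∈ B, ρ x b ∈ B) → B = ⊥ ∨ B = ⊤ := by
    intro B hB
    let V : Subgroup G :=
      { carrier := {u | ∃ hu : u ∈ U, el u hu ∈ B}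
        one_mem' := ⟨U.one_mem, by
          rw [(elker 1 U.one_mem).2 U'.one_mem]; exact B.zero_mem⟩
        mul_mem' := by
          rintro u v ⟨hu, hu'⟩ ⟨hv, hv'⟩
          exact ⟨U.mul_mem hu hv, by rw [eladd u hu v hv]; exact B.add_mem hu' hv'⟩
        inv_mem' := by
          rintro u ⟨hu, hu'⟩
          refine ⟨U.inv_mem hu, ?_⟩
          have h1 := eladd u hu u⁻¹ (U.inv_mem hu)
          have h2 : el (u * u⁻¹) (U.mul_mem hu (U.inv_mem hu)) = 0 := by
            rw [elker _ (U.mul_mem hu (U.inv_mem hu)), mul_inv_cancel]; exact U'.one_mem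
          rw [h2] at h1
          rw [← neg_eq_of_add_eq_zero_right h1.symm]
          exact B.neg_mem hu' }
    have hV : V.Normal := by
      refine ⟨?_⟩
      rintro u ⟨hu, hu'⟩ x
      refine ⟨hU.conj_mem u hu x, ?_⟩
      rw [← hρ x u hu]
      exact hB x _ hu'
    rcases h.2 V hV (fun u hu => ⟨h.1.le hu, by
      rw [(elker u (h.1.le hu)).2 hu]; exact B.zero_mem⟩) (fun u hu => hu.1) with h1 | h1
    · left
      rw [eq_bot_iff]
      intro a ha
      obtain ⟨u, hu, rfl⟩ := hel a
      have : u ∈ V := ⟨hu, ha⟩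
      rw [h1] at this
      rw [AddSubgroup.mem_bot]
      exact (elker u hu).2 this
    · right
      rw [eq_top_iff]
      intro a _
      obtain ⟨u, hu, rfl⟩ := hel a
      have : u ∈ V := by rw [h1]; exact hu
      exact this.2
  obtain ⟨i, χ, θ, hθ⟩ := field_coord (A := A) ρ (by
    intro x y
    refine AddMonoidHom.ext fun a => ?_
    obtain ⟨u, hu, rfl⟩ := hel a
    show ρ x (ρ y (el u hu)) = ρ y (ρ x (el u hu))
    rw [hρ y u hu, hρ x u hu, hρ x _ (hU.conj_mem u hu y), hρ y _ (hU.conj_mem u hu x)]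
    refine eleq _ (hU.conj_mem _ (hU.conj_mem u hu y) x) _ (hU.conj_mem _ (hU.conj_mem u hu x) y) ?_
    have hc : (y * x)⁻¹ * (x * y) ∈ commutator G := by
      have h2 : ⁅x⁻¹, y⁻¹⁆ ∈ commutator G :=
        Subgroup.commutator_mem_commutator (Subgroup.mem_top _) (Subgroup.mem_top _)
      have e : (y * x)⁻¹ * (x * y) = ⁅x⁻¹, y⁻¹⁆ := by
        rw [commutatorElement_def]; group
      rw [e]; exact h2
    have h3 : mk ⁅u, (y * x)⁻¹ * (x * y)⁆ = 1 := (hmk1 _).2 (hcen u hu _ hc)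
    rw [map_commutatorElement, commutatorElement_eq_one_iff_mul_comm] at h3
    simp only [map_mul, map_inv] at h3 ⊢
    have h4 : mk u = (mk y * mk x)⁻¹ * (mk x * mk y) * mk u * ((mk y * mk x)⁻¹ * (mk x * mk y))⁻¹ := by
      rw [← h3]; group
    have h5 : mk y * (mk x * mk u * (mk x)⁻¹) * (mk y)⁻¹ =
      mk y * (mk x * ((mk y * mk x)⁻¹ * (mk x * mk y) * mk u * ((mk y * mk x)⁻¹ * (mk x * mk y))⁻¹) * (mk x)⁻¹) * (mk y)⁻¹ := by
      rw [← h4]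
    rw [h5]
    group) hsimp
  refine ⟨i, χ, fun x => if hx : x ∈ U then θ (el x hx) else 0, h.1.le, ?_, ?_, ?_, ?_, ?_⟩
  · intro u hu v hv
    simp only [hu, hv, U.mul_mem hu hv, dif_pos]
    rw [eladd u hu v hv, map_add]
  · intro x u hu
    simp only [hu, hU.conj_mem u hu x, dif_pos]
    rw [← hρ x u hu, hθ]
  · intro u hu
    simp only [hu, dif_pos]
    rw [← elker u hu]
    exact map_eq_zero_iff θ θ.injective
  · intro a
    obtain ⟨u, hu, e⟩ := hel (θ.symm a)
    refine ⟨u, hu, ?_⟩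
    simp only [hu, dif_pos]
    rw [e]; simp
  · intro B hB
    rcases hsimp (B.comap θ.toAddMonoidHom) (by
      intro x a ha
      have ha' : θ a ∈ B := ha
      show θ (ρ x a) ∈ B
      rw [hθ]
      exact hB x _ ha') with h1 | h1
    · left
      rw [eq_bot_iff]
      intro b hb
      have h2 : θ.symm b ∈ B.comap θ.toAddMonoidHom := by
        show θ (θ.symm b) ∈ B
        rw [θ.apply_symm_apply]; exact hb
      rw [h1, AddSubgroup.mem_bot] at h2
      rw [AddSubgroup.mem_bot]
      simpa using h2
    · right
      rw [eq_top_iff]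
      intro b _
      have h2 : θ.symm b ∈ B.comap θ.toAddMonoidHom := by rw [h1]; trivial
      have h3 : θ (θ.symm b) ∈ B := h2
      rwa [θ.apply_symm_apply] at h3

end Part5
section Part6

open scoped commutatorElement

variable {G : Type*} [Group G]

lemma Step.chi_triv {F : Type*} [Field F] {W W' T : Subgroup G} [hW : W.Normal] {χ : G →* F}
    {π : G → F} (h : Step W W' χ π) (hc : ⁅W, T⁆ ≤ W') : ∀ t ∈ T, χ t = 1 := by
  intro t ht
  rw [Subgroup.commutator_comm, Subgroup.commutator_le] at hc
  obtain ⟨u, hu, h1⟩ := h.surj 1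
  have h2 := hc t ht u hu
  have h3 := (h.ker _ (h.le h2)).2 h2
  have h4 := h.add _ (h.le h2) u hu
  rw [h3, h1] at h4
  have e : ⁅t, u⁆ * u = t * u * t⁻¹ := by rw [commutatorElement_def]; group
  rw [e, h.conj t u hu, h1] at h4
  simpa using h4

lemma lossInv_top [Finite G] (g : G) : ∃ Λ, LossInv g (⊤ : Subgroup G) Λ := by
  refine ⟨∅, by simp, ?_⟩
  intro n
  have h1 : ∀ (Y : Set G) (k : ℕ), pr Y (⊤ : Subgroup G) k = 1 := by
    intro Y k
    have hG : (0 : ℝ) < Nat.card G := by exact_mod_cast Nat.card_pos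
    unfold pr
    have : Gn Y (⊤ : Subgroup G) k = Set.univ := by
      ext v; simp [Gn]
    rw [this, Nat.card_univ, Nat.card_fun]
    simp only [Nat.card_fin, Nat.card_eq_fintype_card, Fintype.card_fin]
    push_cast
    exact div_self (by positivity)
  simp [h1]

lemma lossInv_bot [Finite G] (hnil : Group.IsNilpotent (commutator G)) (g : G) :
    ∃ Λ, LossInv g (⊥ : Subgroup G) Λ := by
  have hA : ∃ Λ, LossInv g (commutator G) Λ := by
    refine stage g (commutator G) ⊤ inferInstance inferInstance le_top ?_ ?_ (lossInv_top g)
    · intro i χ _ _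
      have : Subsingleton {e : G → FF i // IsDer χ e ∧ ∀ t ∈ (⊤ : Subgroup G), e t = 0} := by
        refine ⟨?_⟩
        rintro ⟨e, he, h0⟩ ⟨e', he', h0'⟩
        apply Subtype.ext
        funext x
        show e x = e' x
        rw [h0 x (Subgroup.mem_top x), h0' x (Subgroup.mem_top x)]
      exact (Finite.card_le_one_iff_subsingleton.2 this).trans Nat.card_pos
    · intro W W' hW hW' hS hlt _ hch
      obtain ⟨i, χ, π, hst⟩ := Chief.step (U := W) (U' := W') ⟨hlt, hch⟩ hnil
      refine ⟨i, χ, π, hst, hst.chi_triv ?_⟩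
      exact (Subgroup.commutator_mono le_top le_rfl).trans hS
  refine stage g ⊥ (commutator G) inferInstance inferInstance bot_le ?_ ?_ hA
  · intro i χ hχ ⟨d, hd, t, ht, hdt⟩
    have hne : ∃ h, χ h ≠ 1 := by
      by_contra hcon
      push Not at hcon
      apply hdt
      have hle : commutator G ≤ derEq hd (isDer_zero χ) := by
        rw [commutator_def, Subgroup.commutator_le]
        intro x _ y _
        show d ⁅x, y⁆ = 0
        rw [commutatorElement_def, hd, hd, hd]
        have h1 := hd.inv x
        have h2 := hd.inv y
        simp only [hcon, one_mul] at h1 h2 ⊢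
        linear_combination h1 + h2
      exact hle ht
    obtain ⟨h, hh⟩ := hne
    refine Nat.card_le_card_of_injective (fun e => e.1 h) ?_
    have key : ∀ e : G → FF i, IsDer χ e → (∀ t ∈ commutator G, e t = 0) →
        ∀ x, e x * (χ h - 1) = (χ x - 1) * e h := by
      intro e he h0 x
      have hc : ⁅x, h⁆ ∈ commutator G :=
        Subgroup.commutator_mem_commutator (Subgroup.mem_top _) (Subgroup.mem_top _)
      have e1 : x * h = ⁅x, h⁆ * (h * x) := by rw [commutatorElement_def]; group
      have e2 := he ⁅x, h⁆ (h * x)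
      rw [← e1, h0 _ hc, hχ _ hc, he, he] at e2
      linear_combination -e2
    rintro ⟨e, he, h0⟩ ⟨e', he', h0'⟩ heq
    have heq' : e h = e' h := heq
    apply Subtype.ext
    funext x
    show e x = e' x
    have k1 := key e he h0 x
    have k2 := key e' he' h0' x
    rw [heq', ← k2] at k1
    exact mul_right_cancel₀ (sub_ne_zero.2 hh) k1
  · intro W W' hW hW' _ hlt _ hch
    have hC : Chief W W' := ⟨hlt, hch⟩
    obtain ⟨i, χ, π, hst⟩ := hC.step hnil
    exact ⟨i, χ, π, hst, hst.chi_triv (hC.central hnil)⟩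

lemma pr_bot (Y : Set G) (n : ℕ) : pr Y (⊥ : Subgroup G) n = genProb G Y n := by
  unfold pr genProb Gn
  simp only [sup_bot_eq]
  rfl

lemma sum_sq_le (Q : Finset ℕ) (hQ : ∀ q ∈ Q, 2 ≤ q) : ∑ q ∈ Q, (((q : ℝ)) ^ 2)⁻¹ ≤ 1 := by
  have h1 : ∀ N : ℕ, ∑ k ∈ Finset.range N, (((2 + k : ℕ) : ℝ) ^ 2)⁻¹ ≤ 1 - 1 / ((N : ℝ) + 1) := by
    intro N
    induction N with
    | zero => simp
    | succ N ih =>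
      rw [Finset.sum_range_succ]
      refine (add_le_add_left ih _).trans ?_
      push_cast
      have hN : (0 : ℝ) ≤ N := Nat.cast_nonneg N
      have h2 : ((2 + (N : ℝ)) ^ 2)⁻¹ ≤ 1 / ((N : ℝ) + 1) - 1 / ((N : ℝ) + 1 + 1) := by
        rw [div_sub_div _ _ (by positivity) (by positivity), inv_eq_one_div,
          div_le_div_iff₀ (by positivity) (by positivity)]
        nlinarith
      linarith
  have h3 : Q ⊆ Finset.Ico 2 (2 + (Q.sup id)) := by
    intro q hq
    have := Finset.le_sup (f := id) hq
    have h3 := hQ q hq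
    simp only [id] at this
    rw [Finset.mem_Ico]
    constructor <;> omega
  refine (Finset.sum_le_sum_of_subset_of_nonneg h3 (fun _ _ _ => by positivity)).trans ?_
  rw [Finset.sum_Ico_eq_sum_range]
  have h4 := h1 (2 + Q.sup id - 2)
  have h5 : (0 : ℝ) ≤ 1 / (((2 + Q.sup id - 2 : ℕ) : ℝ) + 1) := by positivity
  linarith

lemma FF_two_le (i : Ix) : 2 ≤ Nat.card (FF i) :=
  Finite.one_lt_card

lemma FF_card_inj : Function.Injective (fun i : Ix => Nat.card (FF i)) := by
  intro i j hij
  simp only [FF_card] at hij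
  apply Nat.Primes.prodNatEquiv.injective
  apply Subtype.ext
  obtain ⟨p, k⟩ := i
  obtain ⟨q, l⟩ := j
  rw [Nat.Primes.prodNatEquiv_apply, Nat.Primes.prodNatEquiv_apply]
  exact hij

lemma loss_sum_le [Finite G] (g : G) (Λ : Finset (Σ i : Ix, (G →* FF i)))
    (hΛ : ∀ s ∈ Λ, s.2 g = 1) (m : ℕ) (v : Fin m → G)
    (hv : Subgroup.closure ({g} ∪ Set.range v) = ⊤) (j : ℕ) :
    ∑ s ∈ Λ, ((Nat.card (FF s.1) : ℝ) ^ (m + (j + 2)))⁻¹ ≤ (1 / 2) ^ j := by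
  classical
  rw [← Finset.sum_fiberwise_of_maps_to (t := Λ.image Sigma.fst) (g := Sigma.fst)
    (fun s hs => Finset.mem_image_of_mem _ hs)]
  have hb : ∀ i ∈ Λ.image Sigma.fst,
      ∑ s ∈ Λ with s.1 = i, ((Nat.card (FF s.1) : ℝ) ^ (m + (j + 2)))⁻¹
        ≤ (1 / 2) ^ j * ((Nat.card (FF i) : ℝ) ^ 2)⁻¹ := by
    intro i _
    have h2 : (2 : ℝ) ≤ Nat.card (FF i) := by exact_mod_cast FF_two_le i
    have hcard : (Λ.filter (fun s => s.1 = i)).card ≤ Nat.card (FF i) ^ m := by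
      have e : Nat.card (FF i) ^ m = Nat.card (Fin m → FF i) := by
        rw [Nat.card_fun]; simp
      have e2 : (Λ.filter (fun s => s.1 = i)).card =
          Nat.card {s // s ∈ Λ.filter (fun s => s.1 = i)} := by
        rw [Nat.card_eq_fintype_card, Fintype.card_coe]
      rw [e, e2]
      have hs1 : ∀ s : {s // s ∈ Λ.filter (fun s => s.1 = i)},
          ∃ χ : G →* FF i, s.1 = ⟨i, χ⟩ ∧ χ g = 1 := by
        rintro ⟨⟨i', χ⟩, hs⟩
        obtain ⟨hs1, rfl⟩ := Finset.mem_filter.1 hs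
        exact ⟨χ, rfl, hΛ _ hs1⟩
      choose X hX1 hX2 using hs1
      refine Nat.card_le_card_of_injective (fun s => fun k => X s (v k)) ?_
      intro s s' hss
      have h1 : X s = X s' := by
        refine MonoidHom.eq_of_eqOn_dense hv ?_
        rintro x (hx | ⟨k, rfl⟩)
        · rw [Set.mem_singleton_iff.1 hx, hX2, hX2]
        · exact congrFun hss k
      apply Subtype.ext
      rw [hX1, hX1, h1]
    rw [Finset.sum_congr rfl (g := fun _ => ((Nat.card (FF i) : ℝ) ^ (m + (j + 2)))⁻¹)
      (fun s hs => by rw [(Finset.mem_filter.1 hs).2]), Finset.sum_const, nsmul_eq_mul]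
    have hc : ((Λ.filter (fun s => s.1 = i)).card : ℝ) ≤ (Nat.card (FF i) : ℝ) ^ m := by
      exact_mod_cast hcard
    have hq : (0 : ℝ) < Nat.card (FF i) := by linarith
    calc _ ≤ (Nat.card (FF i) : ℝ) ^ m * ((Nat.card (FF i) : ℝ) ^ (m + (j + 2)))⁻¹ := by gcongr
      _ = ((Nat.card (FF i) : ℝ)⁻¹) ^ j * ((Nat.card (FF i) : ℝ) ^ 2)⁻¹ := by
        rw [pow_add, pow_add, inv_pow]; field_simp
      _ ≤ _ := by
        gcongr
        rw [one_div]
        gcongr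
  refine (Finset.sum_le_sum hb).trans ?_
  rw [← Finset.mul_sum]
  have h3 : ∑ i ∈ Λ.image Sigma.fst, ((Nat.card (FF i) : ℝ) ^ 2)⁻¹ ≤ 1 := by
    have := sum_sq_le ((Λ.image Sigma.fst).image (fun i : Ix => Nat.card (FF i))) (by
      intro q hq
      obtain ⟨i, _, rfl⟩ := Finset.mem_image.1 hq
      exact FF_two_le i)
    rwa [Finset.sum_image (fun _ _ _ _ h => FF_card_inj h)] at this
  have h4 : (0 : ℝ) ≤ (1 / 2) ^ j := by positivity
  nlinarith

end Part6
section Part7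

variable {G : Type*} [Group G]

lemma genProb_mono [Finite G] (g : G) (n : ℕ) : genProb G ∅ n ≤ genProb G {g} n := by
  unfold genProb
  gcongr
  refine Nat.card_le_card_of_injective (fun v : {v : Fin n → G //
    Subgroup.closure (∅ ∪ Set.range v) = ⊤} => (⟨v.1, by
      refine eq_top_iff.2 (v.2.ge.trans ?_)
      exact Subgroup.closure_mono (Set.union_subset_union_left _ (Set.empty_subset _))⟩ :
      {v : Fin n → G // Subgroup.closure ({g} ∪ Set.range v) = ⊤})) ?_
  intro v w h
  exact Subtype.ext (congrArg (fun x => x.1) h)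

lemma genProb_le_one [Finite G] (Y : Set G) (n : ℕ) : genProb G Y n ≤ 1 := by
  rw [← pr_bot]; exact pr_le_one _ _ _

lemma genProb_nonneg (Y : Set G) (n : ℕ) : 0 ≤ genProb G Y n := by
  rw [← pr_bot]; exact pr_nonneg _ _ _

lemma one_sub_genProb_le [Finite G] (n : ℕ) :
    1 - genProb G ∅ n ≤ (Nat.card (Subgroup G) : ℝ) * (1 / 2) ^ n := by
  classical
  have hG : (0 : ℝ) < Nat.card G := by exact_mod_cast Nat.card_pos
  have hfin : Finite (Subgroup G) := inferInstance
  have := Fintype.ofFinite (Subgroup G)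
  have h1 : Nat.card (Fin n → G) ≤
      Nat.card {v : Fin n → G // Subgroup.closure (∅ ∪ Set.range v) = ⊤} +
      Nat.card (Σ H : {H : Subgroup G // H ≠ ⊤}, (Fin n → H.1)) := by
    rw [← Nat.card_sum]
    refine Nat.card_le_card_of_surjective (fun s => Sum.elim (fun v => v.1)
      (fun w => fun k => ((w.2 k : w.1.1) : G)) s) ?_
    intro v
    by_cases hv : Subgroup.closure (∅ ∪ Set.range v) = ⊤
    · exact ⟨Sum.inl ⟨v, hv⟩, rfl⟩
    · exact ⟨Sum.inr ⟨⟨_, hv⟩, fun k => ⟨v k, Subgroup.subset_closure (Or.inr ⟨k, rfl⟩)⟩⟩, rfl⟩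
  have h2 : (Nat.card (Σ H : {H : Subgroup G // H ≠ ⊤}, (Fin n → H.1)) : ℝ) ≤
      (Nat.card (Subgroup G) : ℝ) * ((Nat.card G : ℝ) ^ n * (1 / 2) ^ n) := by
    rw [Nat.card_sigma]
    push_cast
    have hterm : ∀ H : {H : Subgroup G // H ≠ ⊤}, (Nat.card (Fin n → H.1) : ℝ) ≤
        (Nat.card G : ℝ) ^ n * (1 / 2) ^ n := by
      intro H
      rw [Nat.card_fun, ← mul_pow]
      simp only [Nat.card_eq_fintype_card (α := Fin n), Fintype.card_fin]
      push_cast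
      gcongr
      have hi : 2 ≤ H.1.index := by
        have h3 : H.1.index ≠ 1 := fun h => H.2 (Subgroup.index_eq_one.1 h)
        have h4 : H.1.index ≠ 0 := Subgroup.index_ne_zero_of_finite
        omega
      have h5 := H.1.card_mul_index
      have h6 : Nat.card H.1 * 2 ≤ Nat.card G := by
        rw [← h5]; exact Nat.mul_le_mul_left _ hi
      have h7 : (Nat.card H.1 : ℝ) * 2 ≤ Nat.card G := by exact_mod_cast h6
      linarith
    refine (Finset.sum_le_sum (fun H _ => hterm H)).trans ?_
    rw [Finset.sum_const, nsmul_eq_mul]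
    gcongr
    rw [Finset.card_univ, ← Nat.card_eq_fintype_card]
    exact Nat.card_le_card_of_injective _ Subtype.val_injective
  have h3 : (Nat.card G : ℝ) ^ n ≤
      (Nat.card {v : Fin n → G // Subgroup.closure (∅ ∪ Set.range v) = ⊤} : ℝ) +
      (Nat.card (Subgroup G) : ℝ) * ((Nat.card G : ℝ) ^ n * (1 / 2) ^ n) := by
    rw [Nat.card_fun] at h1
    simp only [Nat.card_eq_fintype_card (α := Fin n), Fintype.card_fin] at h1
    have h1' : (Nat.card G : ℝ) ^ n ≤
      (Nat.card {v : Fin n → G // Subgroup.closure (∅ ∪ Set.range v) = ⊤} : ℝ) +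
      (Nat.card (Σ H : {H : Subgroup G // H ≠ ⊤}, (Fin n → H.1)) : ℝ) := by exact_mod_cast h1
    linarith
  unfold genProb
  have hp : (0 : ℝ) < (Nat.card G : ℝ) ^ n := by positivity
  rw [sub_le_iff_le_add, ← sub_le_iff_le_add', le_div_iff₀ hp]
  linarith

lemma gen_summable_empty [Finite G] : Summable (fun n => 1 - genProb G ∅ n) := by
  refine Summable.of_nonneg_of_le (fun n => sub_nonneg.2 (genProb_le_one _ n))
    (fun n => one_sub_genProb_le n) ?_
  exact (summable_geometric_of_lt_one (by norm_num) (by norm_num)).mul_left _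

lemma gen_summable_single [Finite G] (g : G) : Summable (fun n => 1 - genProb G {g} n) :=
  Summable.of_nonneg_of_le (fun n => sub_nonneg.2 (genProb_le_one _ n))
    (fun n => sub_le_sub_left (genProb_mono g n) 1) gen_summable_empty

lemma geom_aux (m N : ℕ) : ∑ n ∈ Finset.range N, (if n < m then (0 : ℝ) else 4 * (1 / 2) ^ (n - m))
    ≤ 8 - 8 * (1 / 2) ^ (N - m) := by
  induction N with
  | zero => simp
  | succ N ih =>
    rw [Finset.sum_range_succ]
    split_ifs with h
    · have e1 : N + 1 - m = 0 := by omega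
      have e2 : N - m = 0 := by omega
      rw [e1]; rw [e2] at ih
      linarith
    · have e1 : N + 1 - m = (N - m) + 1 := by omega
      rw [e1, pow_succ]
      linarith

lemma loss_bound [Finite G] (hnil : Group.IsNilpotent (commutator G)) (g : G) :
    ∃ m, ∀ n, genProb G {g} n - genProb G ∅ (n + 1) ≤
      (if n < m then (0 : ℝ) else 4 * (1 / 2) ^ (n - m)) := by
  classical
  obtain ⟨Λ, hΛ1, hΛ2⟩ := lossInv_bot hnil g
  simp only [pr_bot] at hΛ2
  have hex : ∃ m, ∃ v : Fin m → G, Subgroup.closure ({g} ∪ Set.range v) = ⊤ := by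
    obtain ⟨m, ⟨e⟩⟩ := Finite.exists_equiv_fin G
    refine ⟨m, e.symm, ?_⟩
    rw [e.symm.surjective.range_eq, Set.union_univ, Subgroup.closure_univ]
  refine ⟨Nat.find hex, ?_⟩
  obtain ⟨v, hv⟩ := Nat.find_spec hex
  have hmin : ∀ n, n < Nat.find hex → genProb G {g} n = 0 := by
    intro n hn
    have h1 := Nat.find_min hex hn
    have h2 : IsEmpty {v : Fin n → G // Subgroup.closure ({g} ∪ Set.range v) = ⊤} :=
      ⟨fun w => h1 ⟨w.1, w.2⟩⟩
    unfold genProb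
    rw [Nat.card_of_isEmpty]
    simp
  generalize Nat.find hex = m at *
  intro n
  have hb0 := genProb_nonneg (G := G) ∅ (n + 1)
  have ha1 := genProb_le_one (G := G) {g} n
  split_ifs with h
  · rw [hmin n h]; linarith
  obtain ⟨j, rfl⟩ := Nat.exists_eq_add_of_le (not_lt.1 h)
  have e : m + j - m = j := by omega
  rw [e]
  rcases j with _ | _ | j
  · rw [pow_zero]; linarith
  · rw [zero_add, pow_one] at *; linarith
  · refine (hΛ2 _).trans ((loss_sum_le g Λ (fun s hs => (hΛ1 s hs).1) m v hv j).trans ?_)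
    have e3 : ((1 : ℝ) / 2) ^ (j + 1 + 1) = (1 / 2) ^ j * (1 / 4) := by
      rw [pow_succ, pow_succ]; ring
    rw [e3]
    linarith

end Part7

/-- If the derived subgroup of a finite group `G` is nilpotent, then
`e(G) - e(G,g) ≤ 11` for every `g ∈ G`. -/
theorem stmt17 (G : Type*) [Group G] [Finite G]
    (hnil : Group.IsNilpotent (commutator G)) (g : G) :
    eTime G ∅ - eTime G {g} ≤ 11 := by
  obtain ⟨m, hm⟩ := loss_bound hnil g
  unfold eTime
  rw [← (gen_summable_empty (G := G)).tsum_sub (gen_summable_single g)]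
  refine Real.tsum_le_of_sum_range_le (fun n => ?_) (fun N => ?_)
  · have := genProb_mono g n
    linarith
  · have h1 : ∑ n ∈ Finset.range N, ((1 - genProb G ∅ n) - (1 - genProb G {g} n)) ≤
        ∑ n ∈ Finset.range N, ((genProb G ∅ (n + 1) - genProb G ∅ n) +
          (if n < m then (0 : ℝ) else 4 * (1 / 2) ^ (n - m))) := by
      refine Finset.sum_le_sum (fun n _ => ?_)
      have := hm n
      linarith
    rw [Finset.sum_add_distrib, Finset.sum_range_sub] at h1
    have h2 := geom_aux m N
    have h3 := genProb_le_one (G := G) ∅ N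
    have h4 := genProb_nonneg (G := G) ∅ 0
    have h5 : (0 : ℝ) ≤ 8 * (1 / 2) ^ (N - m) := by positivity
    linarith
end

section
/- For every integer d ≥ 2 there exists a finite soluble group G with d(G) = d containing an element g such that e(G) - e(G,g) ≥ d·(log 16 - log 9)/log 9 - 8 (≈ 0.262·d - 8). -/
open Subgroup

/-- `d(G)`: the minimal number of generators of `G`. -/
noncomputable def dMin (G : Type*) [Group G] : ℕ :=
  sInf {n : ℕ | ∃ S : Finset G, S.card = n ∧ Subgroup.closure (S : Set G) = ⊤}


lemma aux_genProb_le_one (G : Type*) [Group G] [Finite G] (Y : Set G) (n : ℕ) :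
    genProb G Y n ≤ 1 := by
  unfold genProb
  have hpos : (0 : ℝ) < (Nat.card G : ℝ) ^ n := by
    have : 0 < Nat.card G := Nat.card_pos
    positivity
  rw [div_le_one hpos]
  have h := Nat.card_le_card_of_injective
    (Subtype.val : {v : Fin n → G // Subgroup.closure (Y ∪ Set.range v) = ⊤} → (Fin n → G))
    Subtype.val_injective
  rw [Nat.card_fun, Nat.card_fin] at h
  exact_mod_cast h

lemma aux_genProb_bound (G : Type*) [Group G] [Finite G] (Y : Set G) (n : ℕ)
    (S : Finset (Subgroup G)) (hS : ∀ M ∈ S, 2 * Nat.card M ≤ Nat.card G)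
    (hmax : ∀ M : Subgroup G, M ≠ ⊤ → ∃ M' ∈ S, M ≤ M') :
    1 - genProb G Y n ≤ (S.card : ℝ) / 2 ^ n := by
  classical
  have : Fintype G := Fintype.ofFinite G
  unfold genProb
  have hpos : (0 : ℝ) < (Nat.card G : ℝ) ^ n := by
    have : 0 < Nat.card G := Nat.card_pos
    positivity
  set P : (Fin n → G) → Prop := fun v => Subgroup.closure (Y ∪ Set.range v) = ⊤ with hP
  have h1 : Nat.card {v // P v} = (Finset.univ.filter P).card := by
    rw [Nat.card_eq_fintype_card, Fintype.card_subtype]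
  have h2 : (Finset.univ.filter P).card + (Finset.univ.filter (fun v => ¬ P v)).card
      = Nat.card G ^ n := by
    rw [Finset.card_filter_add_card_filter_not, Finset.card_univ, Fintype.card_fun,
      Fintype.card_fin, Nat.card_eq_fintype_card]
  have h3 : (Finset.univ.filter (fun v => ¬ P v)).card ≤ ∑ M ∈ S, (Nat.card M) ^ n := by
    have hsub : Finset.univ.filter (fun v => ¬ P v) ⊆
        S.biUnion (fun M => Finset.univ.filter (fun v : Fin n → G => ∀ i, v i ∈ M)) := by
      intro v hv
      rw [Finset.mem_filter] at hv
      obtain ⟨M', hM', hle⟩ := hmax _ hv.2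
      rw [Finset.mem_biUnion]
      refine ⟨M', hM', ?_⟩
      rw [Finset.mem_filter]
      exact ⟨Finset.mem_univ _, fun i => hle (Subgroup.subset_closure (Or.inr ⟨i, rfl⟩))⟩
    refine (Finset.card_le_card hsub).trans (Finset.card_biUnion_le.trans ?_)
    refine Finset.sum_le_sum fun M _ => le_of_eq ?_
    rw [← Fintype.card_subtype, ← Nat.card_eq_fintype_card,
      Nat.card_congr (Equiv.subtypePiEquivPi (p := fun (_ : Fin n) (x : G) => x ∈ M)),
      Nat.card_pi]
    simp
  have h4 : (∑ M ∈ S, ((Nat.card M : ℝ)) ^ n) ≤ S.card * ((Nat.card G : ℝ) ^ n / 2 ^ n) := by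
    rw [← nsmul_eq_mul]
    refine Finset.sum_le_card_nsmul _ _ _ fun M hM => ?_
    rw [← div_pow]
    refine pow_le_pow_left₀ (by positivity) ?_ n
    have := hS M hM
    have h' : (2 : ℝ) * Nat.card M ≤ Nat.card G := by exact_mod_cast this
    linarith
  change 1 - (Nat.card {v // P v} : ℝ) / _ ≤ _
  rw [h1]
  have h2' : ((Finset.univ.filter P).card : ℝ) + ((Finset.univ.filter (fun v => ¬ P v)).card : ℝ)
      = (Nat.card G : ℝ) ^ n := by exact_mod_cast h2
  have h3' : ((Finset.univ.filter (fun v => ¬ P v)).card : ℝ) ≤ ∑ M ∈ S, ((Nat.card M : ℝ)) ^ n := by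
    exact_mod_cast h3
  have h5 : 1 - ((Finset.univ.filter P).card : ℝ) / (Nat.card G : ℝ) ^ n =
      ((Finset.univ.filter (fun v => ¬ P v)).card : ℝ) / (Nat.card G : ℝ) ^ n := by
    rw [← h2']
    rw [← h2'] at hpos
    field_simp
    ring
  rw [h5, div_le_iff₀ hpos]
  refine (h3'.trans h4).trans (le_of_eq ?_)
  ring

lemma aux_two_card (G : Type*) [Group G] [Finite G] (M : Subgroup G) (hM : M ≠ ⊤) :
    2 * Nat.card M ≤ Nat.card G := by
  have h := M.card_mul_index
  have h1 : M.index ≠ 1 := fun h => hM (Subgroup.index_eq_one.1 h)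
  have h0 : M.index ≠ 0 := Subgroup.index_ne_zero_of_finite
  have : 2 ≤ M.index := by omega
  nlinarith

lemma aux_summable (G : Type*) [Group G] [Finite G] (Y : Set G) :
    Summable (fun n => 1 - genProb G Y n) := by
  classical
  have : Fintype (Subgroup G) := Fintype.ofFinite _
  set S : Finset (Subgroup G) := Finset.univ.filter (fun M => M ≠ ⊤)
  refine Summable.of_nonneg_of_le (f := fun n => (S.card : ℝ) * (1/2) ^ n)
    (fun n => sub_nonneg.2 (aux_genProb_le_one G Y n)) (fun n => ?_)
    (summable_geometric_two.mul_left _)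
  refine (aux_genProb_bound G Y n S ?_ ?_).trans (le_of_eq ?_)
  · intro M hM
    exact aux_two_card G M (Finset.mem_filter.1 hM).2
  · intro M hM
    exact ⟨M, Finset.mem_filter.2 ⟨Finset.mem_univ _, hM⟩, le_rfl⟩
  · rw [div_pow, one_pow]; ring

/-- In a `2`-group generated by `d` elements, the failure probability is at most `2^(d-n)`. -/
lemma aux_pgroup (H : Type*) [Group H] [Finite H] (hp : IsPGroup 2 H) (d : ℕ) (y : Fin d → H)
    (hy : Subgroup.closure (Set.range y) = ⊤) (n : ℕ) :
    1 - genProb H ∅ n ≤ (2 : ℝ) ^ d / 2 ^ n := by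
  classical
  have : Fintype (Subgroup H) := Fintype.ofFinite _
  set S : Finset (Subgroup H) := Finset.univ.filter (fun M => M.index = 2) with hSdef
  have hcard : S.card ≤ 2 ^ d := by
    have : S.card ≤ (Finset.univ : Finset (Fin d → Bool)).card := by
      refine Finset.card_le_card_of_injOn (fun M i => decide (y i ∈ M)) (fun _ _ => by simp) ?_
      intro M hM M' hM' heq
      have hM2 : M.index = 2 := (Finset.mem_filter.1 hM).2
      have hM2' : M'.index = 2 := (Finset.mem_filter.1 hM').2
      have hyi : ∀ i, y i ∈ M ↔ y i ∈ M' := by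
        intro i
        have := congrFun heq i
        simpa using this
      ext x
      have hx : x ∈ Subgroup.closure (Set.range y) := by rw [hy]; trivial
      induction hx using Subgroup.closure_induction with
      | mem x hx => obtain ⟨i, rfl⟩ := hx; exact hyi i
      | one => simp [one_mem]
      | mul a b _ _ ha hb =>
        rw [Subgroup.mul_mem_iff_of_index_two hM2, Subgroup.mul_mem_iff_of_index_two hM2']
        exact iff_congr ha hb
      | inv a _ ha => simpa using ha
    simpa using this
  have hb := aux_genProb_bound H ∅ n S ?_ ?_
  · refine hb.trans ?_
    gcongr
    exact_mod_cast hcard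
  · intro M hM
    have hM2 : M.index = 2 := (Finset.mem_filter.1 hM).2
    have := M.card_mul_index
    rw [hM2] at this
    omega
  · intro M hM
    obtain ⟨k, hk⟩ := IsPGroup.iff_card.1 hp
    obtain ⟨j, hj⟩ := IsPGroup.iff_card.1 (hp.to_subgroup M)
    have h2 := aux_two_card H M hM
    rw [hk, hj] at h2
    have hjk : j < k := by
      rw [← pow_succ'] at h2
      exact (Nat.pow_le_pow_iff_right (by norm_num)).1 h2
    obtain ⟨M', hM', hle⟩ := Sylow.exists_subgroup_card_pow_prime_le (G := H) 2 (n := j) (m := k - 1)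
      (by rw [hk]; exact pow_dvd_pow 2 (by omega)) M hj (by omega)
    refine ⟨M', Finset.mem_filter.2 ⟨Finset.mem_univ _, ?_⟩, hle⟩
    have hc := M'.card_mul_index
    rw [hM', hk] at hc
    have hk' : k = (k - 1) + 1 := by omega
    rw [hk', pow_succ] at hc
    simp only [Nat.add_sub_cancel] at hc
    exact Nat.eq_of_mul_eq_mul_left (by positivity) hc

lemma aux_eTime_upper (G : Type*) [Group G] [Finite G] (Y : Set G) (d : ℕ)
    (h : ∀ n, 1 - genProb G Y n ≤ (2 : ℝ) ^ d / 2 ^ n) : eTime G Y ≤ d + 2 := by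
  unfold eTime
  have hs := aux_summable G Y
  rw [← hs.sum_add_tsum_nat_add d]
  have h1 : ∑ i ∈ Finset.range d, (1 - genProb G Y i) ≤ d := by
    have : ∑ i ∈ Finset.range d, (1 - genProb G Y i) ≤ ∑ i ∈ Finset.range d, (1 : ℝ) := by
      refine Finset.sum_le_sum fun i _ => ?_
      have : 0 ≤ genProb G Y i := by unfold genProb; positivity
      linarith
    simpa using this
  have h2 : ∑' i, (1 - genProb G Y (i + d)) ≤ ∑' i : ℕ, ((1 : ℝ) / 2) ^ i := by
    refine Summable.tsum_le_tsum (fun i => ?_) ((summable_nat_add_iff d).2 hs) summable_geometric_two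
    refine (h (i + d)).trans (le_of_eq ?_)
    rw [pow_add, div_pow, one_pow]
    field_simp
  rw [tsum_geometric_two] at h2
  linarith

lemma aux_eTime_lower (G : Type*) [Group G] [Finite G] (Y : Set G) (N : ℕ)
    (h : ∀ n, n < N + 1 → genProb G Y (n + 1) ≤ (1 / 9 : ℝ) ^ (N - n)) : (N : ℝ) - 1 ≤ eTime G Y := by
  unfold eTime
  have hs := aux_summable G Y
  have h1 := hs.sum_le_tsum (Finset.range (N + 2))
    (fun n _ => sub_nonneg.2 (aux_genProb_le_one G Y n))
  refine le_trans ?_ h1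
  rw [Finset.sum_range_succ']
  have h0 : 0 ≤ 1 - genProb G Y 0 := sub_nonneg.2 (aux_genProb_le_one G Y 0)
  have h2 : ∑ n ∈ Finset.range (N + 1), (1 - (1 / 9 : ℝ) ^ (N - n)) ≤
      ∑ n ∈ Finset.range (N + 1), (1 - genProb G Y (n + 1)) :=
    Finset.sum_le_sum fun n hn => by
      have := h n (Finset.mem_range.1 hn)
      linarith
  have h3 : ∑ n ∈ Finset.range (N + 1), (1 - (1 / 9 : ℝ) ^ (N - n)) =
      (N + 1) - ∑ n ∈ Finset.range (N + 1), (1 / 9 : ℝ) ^ n := by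
    rw [Finset.sum_sub_distrib]
    have := Finset.sum_range_reflect (fun n => (1 / 9 : ℝ) ^ n) (N + 1)
    simp only [Nat.add_sub_cancel] at this
    rw [← this]
    simp
  have h4 : ∑ n ∈ Finset.range (N + 1), (1 / 9 : ℝ) ^ n ≤ 2 := by
    rw [geom_sum_eq (by norm_num)]
    have : (0 : ℝ) ≤ (1 / 9) ^ (N + 1) := by positivity
    rw [div_le_iff_of_neg (by norm_num)]
    linarith
  linarith

abbrev C2 : Type := Multiplicative (ZMod 2)

lemma aux_dMin (G : Type*) [Group G] [Finite G] (d : ℕ) (z y : Fin d → G)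
    (hz : Subgroup.closure (Set.range z) = ⊤) (χ : Fin d → G →* C2)
    (hχ : ∀ i j, χ i (y j) = if i = j then Multiplicative.ofAdd 1 else 1) : dMin G = d := by
  classical
  have hlow : ∀ S : Finset G, Subgroup.closure (S : Set G) = ⊤ → d ≤ S.card := by
    intro S hS
    have : Finite (G →* C2) := Finite.of_injective (fun f : G →* C2 => (f : G → C2))
      DFunLike.coe_injective
    have h1 : Nat.card (Finset (Fin d)) ≤ Nat.card (G →* C2) := by
      refine Nat.card_le_card_of_injective (fun T => ∏ i ∈ T, χ i) ?_
      intro T T' hTT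
      ext j
      have hev : ∀ T : Finset (Fin d), (∏ i ∈ T, χ i) (y j) =
          if j ∈ T then Multiplicative.ofAdd 1 else 1 := by
        intro T
        rw [MonoidHom.finsetProd_apply]
        simp_rw [hχ]
        rw [Finset.prod_ite_eq' T j]
      have h := DFunLike.congr_fun hTT (y j)
      simp only [hev] at h
      have hne : (Multiplicative.ofAdd 1 : C2) ≠ 1 := by decide
      by_cases a : j ∈ T <;> by_cases b : j ∈ T' <;> simp_all
    have h2 : Nat.card (G →* C2) ≤ Nat.card (S → C2) := by
      refine Nat.card_le_card_of_injective (fun f s => f s.1) ?_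
      intro f f' h
      refine MonoidHom.eq_of_eqOn_dense hS ?_
      intro s hs
      exact congrFun h ⟨s, hs⟩
    have h3 := h1.trans h2
    rw [Nat.card_fun] at h3
    simp only [Nat.card_eq_fintype_card, Fintype.card_finset, Fintype.card_fin,
      Fintype.card_coe] at h3
    have h4 : Fintype.card C2 = 2 := by decide
    rw [h4] at h3
    exact (Nat.pow_le_pow_iff_right (by norm_num)).1 h3
  have hS : Subgroup.closure ((Finset.univ.image z : Finset G) : Set G) = ⊤ := by
    rw [Finset.coe_image, Finset.coe_univ, Set.image_univ]; exact hz
  have hle : (Finset.univ.image z).card ≤ d := by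
    have := Finset.card_image_le (s := Finset.univ) (f := z)
    simpa using this
  unfold dMin
  apply le_antisymm
  · exact Nat.sInf_le ⟨_, le_antisymm hle (hlow _ hS), hS⟩
  · obtain ⟨S, h1, h2⟩ := Nat.sInf_mem (s := {n : ℕ | ∃ S : Finset G, S.card = n ∧
      Subgroup.closure (S : Set G) = ⊤}) ⟨_, _, rfl, hS⟩
    rw [← h1]
    exact hlow S h2

section Semi

variable {K V A H : Type} [Group K] [CommGroup V] [MulDistribMulAction K V] [Group H]

/-- The action of `H` on `A → V` through `π : H →* (A → K)`. -/
def semiAct (V : Type) [CommGroup V] [MulDistribMulAction K V] (π : H →* (A → K)) :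
    H →* MulAut (A → V) :=
  (MulDistribMulAction.toMulAut (A → K) (A → V)).comp π

lemma semiAct_apply (π : H →* (A → K)) (h : H) (u : A → V) (ω : A) :
    semiAct V π h u ω = π h ω • u ω := rfl

lemma aux_inv_sub [Finite A] (π : H →* (A → K))
    (hc : ∀ k : K, ∃ h : H, ∀ ω, π h ω = k)
    (hs : ∀ ω ω' : A, ω ≠ ω' → ∃ h : H, π h ω ≠ π h ω')
    (hT : ∀ v w : V, v ≠ 1 → w ≠ 1 → ∃ k : K, k • v = w)
    (hF : ∀ k k' : K, (∀ v : V, k • v = k' • v) → k = k')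
    (W : Subgroup (A → V)) (hW : ∀ h : H, ∀ u ∈ W, semiAct V π h u ∈ W)
    (g : A → V) (hg : ∀ ω, g ω ≠ 1) (hgW : g ∈ W) : W = ⊤ := by
  classical
  have : Fintype A := Fintype.ofFinite A
  -- elements of `W` supported at one point
  have key : ∀ ω₀ : A, ∀ n : ℕ, ∀ u ∈ W, u ω₀ ≠ 1 →
      (Finset.univ.filter (fun ω => ω ≠ ω₀ ∧ u ω ≠ 1)).card ≤ n →
      ∃ u' ∈ W, u' ω₀ ≠ 1 ∧ ∀ ω, ω ≠ ω₀ → u' ω = 1 := by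
    intro ω₀ n
    induction n with
    | zero =>
      intro u hu h0 hcard
      refine ⟨u, hu, h0, fun ω hω => ?_⟩
      by_contra hne
      have hemp := Finset.card_eq_zero.1 (Nat.le_zero.1 hcard)
      have : ω ∈ Finset.univ.filter (fun ω => ω ≠ ω₀ ∧ u ω ≠ 1) := by simp [hω, hne]
      rw [hemp] at this
      simp at this
    | succ n ih =>
      intro u hu h0 hcard
      by_cases hall : ∀ ω, ω ≠ ω₀ → u ω = 1
      · exact ⟨u, hu, h0, hall⟩
      push Not at hall
      obtain ⟨ω₁, hω₁, h1⟩ := hall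
      obtain ⟨x, hx⟩ := hs ω₀ ω₁ hω₁.symm
      obtain ⟨c, hcc⟩ := hc (π x ω₁)
      -- find a vector separated
      have hv : ∃ v : V, π x ω₀ • v ≠ π x ω₁ • v := by
        by_contra hcon
        push Not at hcon
        exact hx (hF _ _ hcon)
      obtain ⟨v, hv⟩ := hv
      have hv1 : v ≠ 1 := by
        rintro rfl
        simp at hv
      obtain ⟨k, hk⟩ := hT (u ω₀) v h0 hv1
      obtain ⟨κ, hκ⟩ := hc k
      have hmem := hW κ u hu
      set u1 := semiAct V π κ u with hu1
      refine ih (semiAct V π x u1 / semiAct V π c u1)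
        (W.div_mem (hW x _ hmem) (hW c _ hmem)) ?_ ?_
      · rw [Pi.div_apply, semiAct_apply, semiAct_apply, hcc, hu1, semiAct_apply, hκ, hk]
        intro h
        exact hv (div_eq_one.1 h)
      · refine Nat.le_of_lt_succ (lt_of_lt_of_le (Finset.card_lt_card ?_) hcard)
        rw [Finset.ssubset_iff_of_subset]
        · refine ⟨ω₁, by simp [hω₁, h1], ?_⟩
          simp [semiAct_apply, hcc]
        · intro ω
          simp only [Finset.mem_filter, Finset.mem_univ, true_and]
          rintro ⟨ha, hb⟩
          refine ⟨ha, fun hu => hb ?_⟩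
          simp [semiAct_apply, hu1, hu]
  rw [eq_top_iff]
  intro w _
  have hsingle : ∀ ω₀ : A, Pi.mulSingle ω₀ (w ω₀) ∈ W := by
    intro ω₀
    obtain ⟨u, hu, h0, hsup⟩ := key ω₀ _ g hgW (hg ω₀) le_rfl
    by_cases hw : w ω₀ = 1
    · rw [hw, Pi.mulSingle_one]; exact W.one_mem
    obtain ⟨k, hk⟩ := hT (u ω₀) (w ω₀) h0 hw
    obtain ⟨κ, hκ⟩ := hc k
    have : Pi.mulSingle ω₀ (w ω₀) = semiAct V π κ u := by
      funext ω
      rw [semiAct_apply, hκ]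
      by_cases h : ω = ω₀
      · subst h; simp [hk]
      · simp [h, hsup ω h]
    rw [this]
    exact hW κ u hu
  have hprod : w = ∏ ω, Pi.mulSingle ω (w ω) := (Finset.univ_prod_mulSingle w).symm
  rw [hprod]
  exact W.prod_mem fun ω _ => hsingle ω

lemma aux_top [Finite A] (π : H →* (A → K))
    (hc : ∀ k : K, ∃ h : H, ∀ ω, π h ω = k)
    (hs : ∀ ω ω' : A, ω ≠ ω' → ∃ h : H, π h ω ≠ π h ω')
    (hT : ∀ v w : V, v ≠ 1 → w ≠ 1 → ∃ k : K, k • v = w)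
    (hF : ∀ k k' : K, (∀ v : V, k • v = k' • v) → k = k')
    (M : Subgroup ((A → V) ⋊[semiAct V π] H))
    (hM : M.map SemidirectProduct.rightHom = ⊤)
    (g : A → V) (hg : ∀ ω, g ω ≠ 1) (hgM : SemidirectProduct.inl g ∈ M) : M = ⊤ := by
  have hW := aux_inv_sub π hc hs hT hF (M.comap SemidirectProduct.inl) ?_ g hg hgM
  · rw [eq_top_iff]
    intro x _
    have hx : x.right ∈ M.map SemidirectProduct.rightHom := by rw [hM]; trivial
    obtain ⟨m, hm, hmx⟩ := hx
    have hinl : ∀ u : A → V, (SemidirectProduct.inl u : (A → V) ⋊[semiAct V π] H) ∈ M := by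
      intro u
      have : u ∈ M.comap (SemidirectProduct.inl : _ →* (A → V) ⋊[semiAct V π] H) := by
        rw [hW]; trivial
      exact this
    have hmx' : m.right = x.right := hmx
    have : x = SemidirectProduct.inl (x.left / m.left) * m := by
      ext1
      · rw [SemidirectProduct.mul_left, SemidirectProduct.left_inl, SemidirectProduct.right_inl,
          map_one, MulAut.one_apply, div_mul_cancel]
      · rw [SemidirectProduct.mul_right, SemidirectProduct.right_inl, one_mul, hmx']
    rw [this]
    exact M.mul_mem (hinl _) hm
  · intro h u hu
    have hh : h ∈ M.map SemidirectProduct.rightHom := by rw [hM]; trivial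
    obtain ⟨m, hm, rfl⟩ := hh
    have : (SemidirectProduct.inl (semiAct V π (SemidirectProduct.rightHom m) u) :
        (A → V) ⋊[semiAct V π] H) = m * SemidirectProduct.inl u * m⁻¹ := by
      ext1
      · simp
      · simp
    rw [Subgroup.mem_comap, this]
    exact M.mul_mem (M.mul_mem hm hu) (M.inv_mem hm)

/-- Adding `g`, generation of the semidirect product reduces to generation of `H`. -/
lemma aux_genProb_ge [Finite A] [Finite V] [Finite H] (π : H →* (A → K))
    (hc : ∀ k : K, ∃ h : H, ∀ ω, π h ω = k)
    (hs : ∀ ω ω' : A, ω ≠ ω' → ∃ h : H, π h ω ≠ π h ω')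
    (hT : ∀ v w : V, v ≠ 1 → w ≠ 1 → ∃ k : K, k • v = w)
    (hF : ∀ k k' : K, (∀ v : V, k • v = k' • v) → k = k')
    (g : A → V) (hg : ∀ ω, g ω ≠ 1) (n : ℕ) :
    genProb H ∅ n ≤
      genProb ((A → V) ⋊[semiAct V π] H) {SemidirectProduct.inl g} n := by
  unfold genProb
  have hfin : Finite ((A → V) ⋊[semiAct V π] H) :=
    Finite.of_equiv _ (SemidirectProduct.equivProd (φ := semiAct V π)).symm
  have hinj := Nat.card_le_card_of_injective
    (fun p : (Fin n → (A → V)) × {v : Fin n → H // Subgroup.closure (∅ ∪ Set.range v) = ⊤} =>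
      (⟨fun i => ⟨p.1 i, p.2.1 i⟩, by
        apply aux_top π hc hs hT hF _ _ g hg
        · exact Subgroup.subset_closure (Or.inl rfl)
        · refine eq_top_iff.2 (p.2.2.symm.le.trans ((Subgroup.closure_le _).2 ?_))
          rintro x (hx | ⟨i, rfl⟩)
          · exact hx.elim
          · exact ⟨_, Subgroup.subset_closure (Or.inr ⟨i, rfl⟩), rfl⟩⟩ :
        {v : Fin n → (A → V) ⋊[semiAct V π] H //
          Subgroup.closure ({SemidirectProduct.inl g} ∪ Set.range v) = ⊤})) (by
    rintro ⟨u, v, hv⟩ ⟨u', v', hv'⟩ h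
    have h' := congrArg Subtype.val h
    have h1 : u = u' := funext fun i => congrArg SemidirectProduct.left (congrFun h' i)
    have h2 : v = v' := funext fun i => congrArg SemidirectProduct.right (congrFun h' i)
    subst h1 h2
    rfl)
  rw [Nat.card_prod, Nat.card_fun, Nat.card_fin] at hinj
  have hV : 0 < Nat.card (A → V) := Nat.card_pos
  have hH : 0 < Nat.card H := Nat.card_pos
  rw [SemidirectProduct.card, div_le_div_iff₀ (by positivity) (by positivity)]
  push_cast
  rw [mul_pow, ← mul_assoc]
  refine mul_le_mul_of_nonneg_right ?_ (by positivity)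
  rw [mul_comm]
  exact_mod_cast hinj

lemma aux_stab (π : H →* (A → K)) (ω : A) (w : V) :
    ∃ M : Subgroup ((A → V) ⋊[semiAct V π] H),
      ∀ x, x ∈ M ↔ x.left ω * (π x.right ω • w) = w := by
  refine ⟨{ carrier := {x | x.left ω * (π x.right ω • w) = w}
            one_mem' := by simp
            mul_mem' := ?_
            inv_mem' := ?_ }, fun x => Iff.rfl⟩
  · intro x y hx hy
    simp only [Set.mem_ofPred_eq] at hx hy ⊢
    rw [SemidirectProduct.mul_left, SemidirectProduct.mul_right, Pi.mul_apply, semiAct_apply,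
      map_mul, Pi.mul_apply, mul_smul, mul_assoc, ← smul_mul', hy, hx]
  · intro x hx
    simp only [Set.mem_ofPred_eq] at hx ⊢
    rw [SemidirectProduct.inv_left, SemidirectProduct.inv_right, semiAct_apply, ← smul_mul',
      map_inv, Pi.inv_apply, inv_smul_eq_iff, Pi.inv_apply, inv_mul_eq_iff_eq_mul]
    exact hx.symm

lemma aux_genProb_upper [Finite A] [Finite V] [Nontrivial V] [Finite H] (π : H →* (A → K))
    (hc : ∀ k : K, ∃ h : H, ∀ ω, π h ω = k)
    (hfix : ∀ w : V, (∀ k : K, k • w = w) → w = 1) (n : ℕ) :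
    genProb ((A → V) ⋊[semiAct V π] H) ∅ n ≤
      (((Nat.card V : ℝ) ^ n - Nat.card V) / (Nat.card V : ℝ) ^ n) ^ Nat.card A ∨ n = 0 := by
  classical
  have : Fintype A := Fintype.ofFinite A
  have : Fintype V := Fintype.ofFinite V
  have : Fintype H := Fintype.ofFinite H
  rcases Nat.eq_zero_or_pos n with h0 | hn
  · exact Or.inr h0
  left
  have hfin : Finite ((A → V) ⋊[semiAct V π] H) :=
    Finite.of_equiv _ (SemidirectProduct.equivProd (φ := semiAct V π)).symm
  -- the bad affine data
  let D : (Fin n → H) → A → V → (Fin n → V) := fun h ω w i => w / (π (h i) ω • w)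
  have hright : ∀ v : Fin n → (A → V) ⋊[semiAct V π] H,
      Subgroup.closure (∅ ∪ Set.range v) = ⊤ →
      Subgroup.closure (Set.range fun i => (v i).right) = ⊤ := by
    intro v hv
    rw [eq_top_iff]
    intro h _
    have hm : (SemidirectProduct.inr h : (A → V) ⋊[semiAct V π] H) ∈
        (Subgroup.closure (Set.range fun i => (v i).right)).comap SemidirectProduct.rightHom := by
      have hle : Subgroup.closure (∅ ∪ Set.range v) ≤
          (Subgroup.closure (Set.range fun i => (v i).right)).comap SemidirectProduct.rightHom := by
        rw [Subgroup.closure_le]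
        rintro x (hx | ⟨i, rfl⟩)
        · exact hx.elim
        · exact Subgroup.subset_closure ⟨i, rfl⟩
      apply hle
      rw [hv]; trivial
    simpa using hm
  have hDinj : ∀ h : Fin n → H, Subgroup.closure (Set.range h) = ⊤ → ∀ ω,
      Function.Injective (D h ω) := by
    intro h hh ω w w' hww
    have hfixed : ∀ x : H, π x ω • (w / w') = w / w' := by
      intro x
      have hx : x ∈ Subgroup.closure (Set.range h) := by rw [hh]; trivial
      induction hx using Subgroup.closure_induction with
      | mem x hx =>
        obtain ⟨i, rfl⟩ := hx
        have := congrFun hww i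
        simp only [D] at this
        rw [smul_div']
        rw [div_eq_div_iff_mul_eq_mul] at this ⊢
        rw [mul_comm, ← this, mul_comm]
      | one => simp
      | mul a b _ _ ha hb => rw [map_mul, Pi.mul_apply, mul_smul, hb, ha]
      | inv a _ ha => rw [map_inv, Pi.inv_apply, inv_smul_eq_iff, ha]
    refine div_eq_one.1 (hfix _ fun k => ?_)
    obtain ⟨x, hx⟩ := hc k
    rw [← hx ω]
    exact hfixed x
  have hnot : ∀ v : Fin n → (A → V) ⋊[semiAct V π] H,
      Subgroup.closure (∅ ∪ Set.range v) = ⊤ → ∀ ω w,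
      (fun i => (v i).left ω) ≠ D (fun i => (v i).right) ω w := by
    intro v hv ω w heq
    obtain ⟨M, hM⟩ := aux_stab (V := V) π ω w
    have hle : Subgroup.closure (∅ ∪ Set.range v) ≤ M := by
      rw [Subgroup.closure_le]
      rintro x (hx | ⟨i, rfl⟩)
      · exact hx.elim
      · rw [SetLike.mem_coe, hM]
        have := congrFun heq i
        simp only [D] at this
        rw [this]
        simp
    rw [hv, top_le_iff] at hle
    obtain ⟨a, ha⟩ := exists_ne (1 : V)
    have hmem : (SemidirectProduct.inl (fun _ => a) : (A → V) ⋊[semiAct V π] H) ∈ M := by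
      rw [hle]; trivial
    rw [hM] at hmem
    simp at hmem
    exact ha hmem
  -- counting
  let q := Nat.card V
  let T : (Fin n → H) → Finset (A → (Fin n → V)) := fun h =>
    Fintype.piFinset fun ω => (Finset.univ.image (D h ω))ᶜ
  let S : Finset ((h : Fin n → H) × (A → (Fin n → V))) :=
    (Finset.univ.filter fun h : Fin n → H => Subgroup.closure (Set.range h) = ⊤).sigma T
  have hTcard : ∀ h : Fin n → H, Subgroup.closure (Set.range h) = ⊤ →
      (T h).card = (q ^ n - q) ^ Nat.card A := by
    intro h hh
    simp only [T]
    rw [Fintype.card_piFinset]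
    have : ∀ ω, ((Finset.univ.image (D h ω))ᶜ).card = q ^ n - q := by
      intro ω
      rw [Finset.card_compl, Finset.card_image_of_injective _ (hDinj h hh ω), Finset.card_univ,
        Fintype.card_fun, Fintype.card_fin, ← Nat.card_eq_fintype_card]
    simp only [this]
    rw [Finset.prod_const, Finset.card_univ, Nat.card_eq_fintype_card]
  have hScard : S.card ≤ Nat.card H ^ n * (q ^ n - q) ^ Nat.card A := by
    simp only [S]
    rw [Finset.card_sigma]
    have hb : (Finset.univ.filter fun h : Fin n → H => Subgroup.closure (Set.range h) = ⊤).card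
        ≤ Nat.card H ^ n := by
      refine (Finset.card_le_univ _).trans (le_of_eq ?_)
      rw [Fintype.card_fun, Fintype.card_fin, Nat.card_eq_fintype_card]
    rw [Finset.sum_congr rfl fun h hh => hTcard h (Finset.mem_filter.1 hh).2, Finset.sum_const,
      smul_eq_mul]
    exact Nat.mul_le_mul_right _ hb
  have hmain : Nat.card {v : Fin n → (A → V) ⋊[semiAct V π] H //
      Subgroup.closure (∅ ∪ Set.range v) = ⊤} ≤ Nat.card S := by
    refine Nat.card_le_card_of_injective (fun v =>
      (⟨⟨fun i => (v.1 i).right, fun ω i => (v.1 i).left ω⟩, ?_⟩ : S)) ?_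
    · simp only [S, T]
      rw [Finset.mem_sigma]
      refine ⟨Finset.mem_filter.2 ⟨Finset.mem_univ _, hright _ v.2⟩, ?_⟩
      rw [Fintype.mem_piFinset]
      intro ω
      rw [Finset.mem_compl, Finset.mem_image]
      rintro ⟨w, _, hw⟩
      exact hnot v.1 v.2 ω w hw.symm
    · rintro ⟨v, hv⟩ ⟨v', hv'⟩ h
      have h' := congrArg Subtype.val h
      simp only [Sigma.mk.injEq, heq_eq_eq] at h'
      apply Subtype.ext
      funext i
      ext1
      · funext ω
        exact congrFun (congrFun h'.2 ω) i
      · exact congrFun h'.1 i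
  rw [Nat.card_eq_fintype_card (α := S), Fintype.card_coe] at hmain
  have hfinal := hmain.trans hScard
  have hq : 0 < q := Nat.card_pos
  have hH : 0 < Nat.card H := Nat.card_pos
  have hle : q ≤ q ^ n := Nat.le_self_pow hn.ne' q
  unfold genProb
  rw [SemidirectProduct.card, Nat.card_fun, div_pow]
  change _ ≤ ((q : ℝ) ^ n - q) ^ _ / _
  rw [div_le_div_iff₀ (by push_cast; positivity) (by positivity)]
  have hfinal' : (Nat.card {v : Fin n → (A → V) ⋊[semiAct V π] H //
      Subgroup.closure (∅ ∪ Set.range v) = ⊤} : ℝ) ≤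
      (Nat.card H : ℝ) ^ n * ((q : ℝ) ^ n - q) ^ Nat.card A := by
    have : (((q ^ n - q : ℕ)) : ℝ) = (q : ℝ) ^ n - q := by push_cast [Nat.cast_sub hle]; ring
    rw [← this]
    exact_mod_cast hfinal
  calc _ ≤ (Nat.card H : ℝ) ^ n * ((q : ℝ) ^ n - q) ^ Nat.card A *
        (((q : ℝ) ^ n) ^ Nat.card A) := mul_le_mul_of_nonneg_right hfinal' (by positivity)
    _ = _ := by
      simp only [q]
      push_cast
      ring

end Semi

/-- The semidihedral group of order 16: pairs `(i, j)` standing for `a ^ i * b ^ j`. -/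
structure SD where
  i : ZMod 8
  j : ZMod 2

namespace SD

def equivProd : SD ≃ ZMod 8 × ZMod 2 where
  toFun x := (x.i, x.j)
  invFun p := ⟨p.1, p.2⟩
  left_inv _ := rfl
  right_inv _ := rfl

instance : DecidableEq SD := fun x y =>
  decidable_of_iff (equivProd x = equivProd y) equivProd.injective.eq_iff

instance : Fintype SD := Fintype.ofEquiv _ equivProd.symm

instance : Mul SD := ⟨fun x y => ⟨if x.j = 0 then x.i + y.i else x.i + 3 * y.i, x.j + y.j⟩⟩
instance : One SD := ⟨⟨0, 0⟩⟩
instance : Inv SD := ⟨fun x => ⟨if x.j = 0 then - x.i else - (3 * x.i), x.j⟩⟩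

lemma card : Nat.card SD = 16 := by
  rw [Nat.card_congr equivProd, Nat.card_prod, Nat.card_zmod, Nat.card_zmod]

instance : Group SD where
  mul_assoc := by decide +kernel
  one_mul := by decide +kernel
  mul_one := by decide +kernel
  inv_mul_cancel := by decide +kernel

end SD

/-- The natural module `F_9`, written multiplicatively. -/
abbrev V9 : Type := Multiplicative (ZMod 3 × ZMod 3)

/-- Multiplication by `1 + i`. -/
def rotV (v : V9) : V9 := Multiplicative.ofAdd (v.toAdd.1 - v.toAdd.2, v.toAdd.1 + v.toAdd.2)

/-- Conjugation. -/
def conjV (v : V9) : V9 := Multiplicative.ofAdd (v.toAdd.1, - v.toAdd.2)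

instance : MulDistribMulAction SD V9 where
  smul x v := rotV^[x.i.val] (if x.j = 0 then v else conjV v)
  one_smul := by decide +kernel
  mul_smul := by decide +kernel
  smul_mul := by decide +kernel
  smul_one := by decide +kernel

lemma V9_trans : ∀ v w : V9, v ≠ 1 → w ≠ 1 → ∃ k : SD, k • v = w := by decide +kernel

lemma V9_faithful : ∀ k k' : SD, (∀ v : V9, k • v = k' • v) → k = k' := by decide +kernel

lemma V9_fix : ∀ w : V9, (∀ k : SD, k • w = w) → w = 1 := by decide +kernel

lemma SD_gen : ∀ x : SD, ∃ i : Fin 8, ∃ j : Fin 2,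
    x = (⟨1, 0⟩ : SD) ^ (i : ℕ) * (⟨0, 1⟩ : SD) ^ (j : ℕ) := by decide +kernel

lemma V9_card : Nat.card V9 = 9 := by
  rw [Nat.card_congr Multiplicative.toAdd, Nat.card_prod, Nat.card_zmod]

lemma V9_cube : ∀ v : V9, v ^ 3 = 1 := by decide +kernel

section Construction

/-- The coordinate functions generating the `2`-group. -/
def kk (m : ℕ) : Fin (m + 3) → (Fin m → SD) → SD :=
  Fin.cons 1 (Fin.cons (fun _ => ⟨1, 0⟩) (Fin.cons (fun _ => ⟨0, 1⟩) (fun j ω => ω j)))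

def yy (m : ℕ) (i : Fin (m + 3)) : ((Fin m → SD) → SD) × (Fin (m + 3) → C2) :=
  (kk m i, Pi.mulSingle i (Multiplicative.ofAdd 1))

def HH (m : ℕ) : Subgroup (((Fin m → SD) → SD) × (Fin (m + 3) → C2)) :=
  Subgroup.closure (Set.range (yy m))

def yH (m : ℕ) (i : Fin (m + 3)) : HH m := ⟨yy m i, Subgroup.subset_closure ⟨i, rfl⟩⟩

lemma yH_closure (m : ℕ) : Subgroup.closure (Set.range (yH m)) = ⊤ := by
  have h := Subgroup.closure_closure_coe_preimage (k := Set.range (yy m))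
  rw [eq_top_iff]
  refine h.symm.le.trans (Subgroup.closure_mono ?_)
  rintro ⟨x, hx⟩ ⟨i, hi⟩
  exact ⟨i, Subtype.ext hi⟩

def piH (m : ℕ) : HH m →* ((Fin m → SD) → SD) := (MonoidHom.fst _ _).comp (HH m).subtype

lemma piH_y (m : ℕ) (i) : piH m (yH m i) = kk m i := rfl

lemma piH_const (m : ℕ) (k : SD) : ∃ h : HH m, ∀ ω, piH m h ω = k := by
  obtain ⟨i, j, hij⟩ := SD_gen k
  refine ⟨yH m 1 ^ (i : ℕ) * yH m 2 ^ (j : ℕ), fun ω => ?_⟩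
  rw [map_mul, map_pow, map_pow, piH_y, piH_y, hij]
  rfl

lemma piH_sep (m : ℕ) (ω ω' : Fin m → SD) (h : ω ≠ ω') : ∃ h : HH m, piH m h ω ≠ piH m h ω' := by
  obtain ⟨j, hj⟩ := Function.ne_iff.1 h
  exact ⟨yH m j.succ.succ.succ, hj⟩

lemma HH_pgroup (m : ℕ) : IsPGroup 2 (HH m) := by
  apply IsPGroup.to_subgroup
  have h2 : Nat.card C2 = 2 := by
    rw [Nat.card_congr Multiplicative.toAdd, Nat.card_zmod]
  apply IsPGroup.of_card (n := 4 * Nat.card (Fin m → SD) + (m + 3))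
  rw [Nat.card_prod, Nat.card_fun (α := Fin m → SD), Nat.card_fun (α := Fin (m + 3)), h2, SD.card,
    Nat.card_fin, pow_add 2 (4 * _), pow_mul]
  norm_num

abbrev GG (m : ℕ) : Type := ((Fin m → SD) → V9) ⋊[semiAct V9 (piH m)] (HH m)

instance GG_finite (m : ℕ) : Finite (GG m) :=
  Finite.of_equiv _ (SemidirectProduct.equivProd (φ := semiAct V9 (piH m))).symm

lemma GG_solvable (m : ℕ) : Group.IsSolvable (GG m) := by
  have : Group.IsSolvable (HH m) := by
    have : Fact (Nat.Prime 2) := ⟨Nat.prime_two⟩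
    have := (HH_pgroup m).isNilpotent
    infer_instance
  refine Group.isSolvable_of_ker_le_range (SemidirectProduct.inl : _ →* GG m)
    (SemidirectProduct.rightHom) ?_
  exact SemidirectProduct.range_inl_eq_ker_rightHom.symm.le

def vv : V9 := Multiplicative.ofAdd (1, 0)

lemma vv_ne : vv ≠ 1 := by decide

def gg (m : ℕ) : (Fin m → SD) → V9 := fun _ => vv

def zz (m : ℕ) (i : Fin (m + 3)) : GG m :=
  if i = 0 then SemidirectProduct.inl (gg m) * SemidirectProduct.inr (yH m 0)
  else SemidirectProduct.inr (yH m i)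

lemma zz_closure (m : ℕ) : Subgroup.closure (Set.range (zz m)) = ⊤ := by
  set M := Subgroup.closure (Set.range (zz m)) with hM
  have hz : ∀ i, zz m i ∈ M := fun i => Subgroup.subset_closure ⟨i, rfl⟩
  have h0 : zz m 0 = SemidirectProduct.inl (gg m) * SemidirectProduct.inr (yH m 0) := by
    simp [zz]
  have hcomm : Commute (SemidirectProduct.inl (gg m) : GG m) (SemidirectProduct.inr (yH m 0)) := by
    have hy : semiAct V9 (piH m) (yH m 0) (gg m) = gg m := by
      funext ω
      rw [semiAct_apply, piH_y]
      exact one_smul _ _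
    have := SemidirectProduct.inl_aut (φ := semiAct V9 (piH m)) (yH m 0) (gg m)
    rw [hy, map_inv, eq_mul_inv_iff_mul_eq] at this
    exact this
  have hg3 : (SemidirectProduct.inl (gg m) : GG m) ^ 3 = 1 := by
    rw [← map_pow]
    have : gg m ^ 3 = 1 := by
      funext ω
      exact V9_cube _
    rw [this, map_one]
  have hy2 : yH m 0 ^ 2 = 1 := by
    apply Subtype.ext
    change (yy m 0) ^ 2 = 1
    have hk : kk m 0 = 1 := rfl
    rw [yy, hk, Prod.pow_mk, one_pow, ← Pi.mulSingle_pow]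
    have : (Multiplicative.ofAdd 1 : C2) ^ 2 = 1 := by decide
    rw [this, Pi.mulSingle_one]
    rfl
  have hyM : (SemidirectProduct.inr (yH m 0) : GG m) ∈ M := by
    have : (zz m 0) ^ 3 = SemidirectProduct.inr (yH m 0) := by
      rw [h0, hcomm.mul_pow, hg3, one_mul, ← map_pow, pow_succ, hy2, one_mul]
    rw [← this]
    exact M.pow_mem (hz 0) 3
  have hgM : (SemidirectProduct.inl (gg m) : GG m) ∈ M := by
    have : (SemidirectProduct.inl (gg m) : GG m) =
        zz m 0 * (SemidirectProduct.inr (yH m 0))⁻¹ := by rw [h0, mul_inv_cancel_right]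
    rw [this]
    exact M.mul_mem (hz 0) (M.inv_mem hyM)
  refine aux_top (piH m) (piH_const m) (piH_sep m) V9_trans V9_faithful M ?_ (gg m)
    (fun _ => vv_ne) hgM
  refine eq_top_iff.2 ((yH_closure m).symm.le.trans ((Subgroup.closure_le _).2 ?_))
  rintro _ ⟨i, rfl⟩
  by_cases hi : i = 0
  · subst hi
    exact ⟨_, hyM, rfl⟩
  · refine ⟨_, hz i, ?_⟩
    simp [zz, hi]

lemma GG_dMin (m : ℕ) : dMin (GG m) = m + 3 := by
  refine aux_dMin (GG m) (m + 3) (zz m) (fun i => SemidirectProduct.inr (yH m i)) (zz_closure m)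
    (fun i => ((Pi.evalMonoidHom (fun _ => C2) i).comp
      ((MonoidHom.snd _ _).comp (HH m).subtype)).comp SemidirectProduct.rightHom) ?_
  intro i j
  change (Pi.mulSingle j (Multiplicative.ofAdd 1) : Fin (m + 3) → C2) i = _
  rw [Pi.mulSingle_apply]

lemma GG_upper (m : ℕ) : eTime (GG m) {SemidirectProduct.inl (gg m)} ≤ (m + 3 : ℕ) + 2 := by
  apply aux_eTime_upper
  intro n
  have h1 := aux_genProb_ge (piH m) (piH_const m) (piH_sep m) V9_trans V9_faithful (gg m)
    (fun _ => vv_ne) n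
  have : Fact (Nat.Prime 2) := ⟨Nat.prime_two⟩
  have h2 := aux_pgroup (HH m) (HH_pgroup m) (m + 3) (yH m) (yH_closure m) n
  linarith

lemma aux_pow_bound (x : ℝ) (hx0 : 0 < x) (hx1 : x ≤ 1) (M : ℕ) (hM : 0 < M) :
    (1 - x) ^ M ≤ 1 / (M * x) := by
  have hM' : (0 : ℝ) < M := by exact_mod_cast hM
  rw [le_div_iff₀ (by positivity)]
  have h1 : 1 + (M : ℝ) * x ≤ (1 + x) ^ M := one_add_mul_le_pow (by linarith) M
  have h2 : 0 ≤ (1 - x) ^ M := pow_nonneg (by linarith) M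
  have h3 : (1 - x) ^ M * (1 + x) ^ M ≤ 1 := by
    rw [← mul_pow]
    exact pow_le_one₀ (by nlinarith) (by nlinarith)
  nlinarith

lemma GG_lower (m : ℕ) : (Nat.log 9 (16 ^ m) : ℝ) - 1 ≤ eTime (GG m) ∅ := by
  apply aux_eTime_lower
  intro n hn
  set N := Nat.log 9 (16 ^ m) with hN
  have h9 : 9 ^ N ≤ 16 ^ m := Nat.pow_log_le_self 9 (by positivity)
  have h9' : (9 : ℝ) ^ N ≤ 16 ^ m := by exact_mod_cast h9
  rcases aux_genProb_upper (piH m) (piH_const m) V9_fix (n + 1) with h | h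
  swap
  · omega
  refine h.trans ?_
  rw [Nat.card_fun, Nat.card_fin, SD.card, V9_card]
  have he : ((((9 : ℕ) : ℝ)) ^ (n + 1) - ((9 : ℕ) : ℝ)) / ((9 : ℕ) : ℝ) ^ (n + 1)
      = 1 - 1 / 9 ^ n := by
    push_cast
    field_simp
    ring
  rw [he]
  have hpos : (0 : ℝ) < 9 ^ n := by positivity
  refine (aux_pow_bound (1 / 9 ^ n) (by positivity) ?_ (16 ^ m) (by positivity)).trans ?_
  · rw [div_le_one hpos]
    exact one_le_pow₀ (by norm_num)
  · obtain ⟨k, hk⟩ : ∃ k, N = n + k := ⟨N - n, by omega⟩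
    have hkk : N - n = k := by omega
    rw [hkk, div_pow, one_pow]
    push_cast
    rw [hk, pow_add] at h9'
    refine one_div_le_one_div_of_le (by positivity) ?_
    rw [mul_one_div, le_div_iff₀ hpos]
    linarith

end Construction

lemma aux_singleton_one (G : Type*) [Group G] : eTime G {1} = eTime G ∅ := by
  unfold eTime genProb
  have : ∀ (n : ℕ) (v : Fin n → G), Subgroup.closure ({1} ∪ Set.range v) =
      Subgroup.closure (∅ ∪ Set.range v) := by
    intro n v
    rw [Subgroup.closure_union, Subgroup.closure_union, Subgroup.closure_singleton_one,
      Subgroup.closure_empty]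
  simp_rw [this]

lemma aux_C22 : dMin (Fin 2 → C2) = 2 := by
  refine aux_dMin _ 2 (fun i => Pi.mulSingle i (Multiplicative.ofAdd 1))
    (fun i => Pi.mulSingle i (Multiplicative.ofAdd 1)) ?_ (fun i => Pi.evalMonoidHom _ i) ?_
  · rw [eq_top_iff]
    intro w _
    rw [← Finset.univ_prod_mulSingle w]
    refine Subgroup.prod_mem _ fun i _ => ?_
    have hw : ∀ c : C2, c = 1 ∨ c = Multiplicative.ofAdd 1 := by decide
    rcases hw (w i) with h | h
    · rw [h, Pi.mulSingle_one]; exact Subgroup.one_mem _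
    · rw [h]; exact Subgroup.subset_closure ⟨i, rfl⟩
  · intro i j
    change (Pi.mulSingle j (Multiplicative.ofAdd 1) : Fin 2 → C2) i = _
    rw [Pi.mulSingle_apply]

/-- For every `d ≥ 2` there is a finite soluble group `G` with `d(G) = d` and an element
`g` with `e(G) - e(G,g) ≥ d·(log 16 - log 9)/log 9 - 8`. -/
theorem stmt19 (d : ℕ) (hd : 2 ≤ d) :
    ∃ (G : Type) (_ : Group G) (_ : Finite G) (_ : IsSolvable G),
      dMin G = d ∧ ∃ g : G,
        (d : ℝ) * (Real.log 16 - Real.log 9) / Real.log 9 - 8 ≤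
          eTime G ∅ - eTime G {g} := by
  have hl9 : 0 < Real.log 9 := Real.log_pos (by norm_num)
  have h43 : 3 * Real.log 16 ≤ 4 * Real.log 9 := by
    have h := Real.log_le_log (x := 16 ^ 3) (y := 9 ^ 4) (by norm_num) (by norm_num)
    rw [Real.log_pow, Real.log_pow] at h
    exact_mod_cast h
  rcases Nat.lt_or_ge d 3 with h3 | h3
  · obtain rfl : d = 2 := by omega
    refine ⟨Fin 2 → C2, inferInstance, inferInstance,
      (inferInstance : Group.IsSolvable (Fin 2 → C2)), aux_C22, 1, ?_⟩
    rw [aux_singleton_one, sub_self, sub_nonpos, div_le_iff₀ hl9]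
    push_cast
    linarith
  · obtain ⟨m, rfl⟩ : ∃ m, d = m + 3 := ⟨d - 3, by omega⟩
    refine ⟨GG m, inferInstance, GG_finite m, GG_solvable m, GG_dMin m,
      SemidirectProduct.inl (gg m), ?_⟩
    have h1 := GG_upper m
    have h2 := GG_lower m
    set N := Nat.log 9 (16 ^ m) with hN
    have h9 : 16 ^ m < 9 ^ (N + 1) := Nat.lt_pow_succ_log_self (by norm_num) _
    have h9' : (16 : ℝ) ^ m ≤ 9 ^ (N + 1) := by exact_mod_cast h9.le
    have hlog : (m : ℝ) * Real.log 16 ≤ ((N : ℝ) + 1) * Real.log 9 := by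
      have h := Real.log_le_log (by positivity) h9'
      rw [Real.log_pow, Real.log_pow] at h
      exact_mod_cast h
    have h4 : ((m + 3 : ℕ) : ℝ) * (Real.log 16 - Real.log 9) / Real.log 9 ≤
        (N : ℝ) + 5 - (m + 3 : ℕ) := by
      rw [div_le_iff₀ hl9]
      push_cast
      nlinarith
    linarith
end
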